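/- arXiv:2111.02746 — 3 statements merged into one kernel-verified Lean document; each statement's English description precedes it below -/
import Mathlib

section
/- For every integer n ≥ 2, D(n) = 3^k, where k = min{ j ∈ ℤ⁺ : 3^j ≥ √n }. -/
/-- A collision of `a³ + a` modulo `m²` below `B`. -/
def Coll (m B : ℕ) : Prop :=
  ∃ a b : ℕ, 1 ≤ a ∧ a < b ∧ b ≤ B ∧ b ^ 3 + b ≡ a ^ 3 + a [MOD m ^ 2]

lemma coll_of (m B a d : ℕ) (ha : 1 ≤ a) (hd : 1 ≤ d) (hB : a + d ≤ B)
    (h : m ^ 2 ∣ d * (3 * a ^ 2 + 3 * a * d + d ^ 2 + 1)) : Coll m B := by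
  refine ⟨a, a + d, ha, by omega, hB, ?_⟩
  have e : (a + d) ^ 3 + (a + d) = a ^ 3 + a + d * (3 * a ^ 2 + 3 * a * d + d ^ 2 + 1) := by ring
  rw [e]
  exact ((Nat.ModEq.refl (a ^ 3 + a)).add ((Nat.modEq_zero_iff_dvd).2 h))

lemma three_inj (k a b : ℕ) (hab : a < b) (ha : 1 ≤ a) (hb : b ≤ 9 ^ k) :
    ¬ (b ^ 3 + b ≡ a ^ 3 + a [MOD (3 ^ k) ^ 2]) := by
  intro h
  obtain ⟨d, rfl⟩ := Nat.exists_eq_add_of_lt hab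
  have e : (a + d + 1) ^ 3 + (a + d + 1) =
    a ^ 3 + a + (d + 1) * (3 * a ^ 2 + 3 * a * (d + 1) + (d + 1) ^ 2 + 1) := by ring
  have h2 := (Nat.modEq_iff_dvd' (by rw [e]; omega)).1 h.symm
  rw [e, Nat.add_sub_cancel_left, ← pow_mul, mul_comm k 2, pow_mul] at h2
  norm_num at h2
  have hc : Nat.Coprime 3 (3 * a ^ 2 + 3 * a * (d + 1) + (d + 1) ^ 2 + 1) := by
    rw [Nat.Prime.coprime_iff_not_dvd Nat.prime_three]
    intro h3
    have h4 : 3 ∣ (d + 1) ^ 2 + 1 := by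
      have : 3 ∣ 3 * (a ^ 2 + a * (d + 1)) := Dvd.intro _ rfl
      rw [show 3 * a ^ 2 + 3 * a * (d + 1) + (d + 1) ^ 2 + 1
        = 3 * (a ^ 2 + a * (d + 1)) + ((d + 1) ^ 2 + 1) by ring] at h3
      exact (Nat.dvd_add_right this).1 h3
    have : (d + 1) % 3 = 0 ∨ (d + 1) % 3 = 1 ∨ (d + 1) % 3 = 2 := by omega
    have h5 := Nat.mod_eq_zero_of_dvd h4
    rcases this with h | h | h <;> simp [Nat.add_mod, Nat.pow_mod, h] at h5
  have hc9 : Nat.Coprime (9 ^ k) (3 * a ^ 2 + 3 * a * (d + 1) + (d + 1) ^ 2 + 1) := by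
    rw [show 9 = 3 ^ 2 by norm_num, ← pow_mul]
    exact Nat.Coprime.pow_left _ hc
  have := Nat.le_of_dvd (by omega) (hc9.dvd_of_dvd_mul_right h2)
  omega

lemma hensel (p : ℕ) (hp : p.Prime) (α β γ x0 : ℤ)
    (h0 : (p : ℤ) ∣ α * x0 ^ 2 + β * x0 + γ) (h1 : ¬ (p : ℤ) ∣ 2 * α * x0 + β) (j : ℕ) :
    ∃ x : ℤ, (p : ℤ) ^ (j + 1) ∣ α * x ^ 2 + β * x + γ ∧ (p : ℤ) ∣ x - x0 := by
  induction j with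
  | zero => exact ⟨x0, by simpa using h0, by simp⟩
  | succ j ih =>
    obtain ⟨x, ⟨w, hw⟩, ⟨y, hy⟩⟩ := ih
    have hc : IsCoprime (2 * α * x + β) (p : ℤ) := by
      rw [isCoprime_comm, Prime.coprime_iff_not_dvd (Nat.prime_iff_prime_int.1 hp)]
      intro h
      apply h1
      have : 2 * α * x0 + β = (2 * α * x + β) - p * (2 * α * y) := by
        have : x = x0 + p * y := by linarith
        rw [this]; ring
      rw [this]
      exact dvd_sub h (Dvd.intro _ rfl)
    obtain ⟨r, s, hrs⟩ := hc
    refine ⟨x + p ^ (j + 1) * (-w * r), ⟨w * s + α * p ^ j * (w * r) ^ 2, ?_⟩,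
      ⟨y + p ^ j * (-w * r), by rw [add_sub_right_comm, hy]; ring⟩⟩
    have e : α * (x + p ^ (j + 1) * (-w * r)) ^ 2 + β * (x + p ^ (j + 1) * (-w * r)) + γ
       = (α * x ^ 2 + β * x + γ) - p ^ (j + 1) * w * (r * (2 * α * x + β))
        + α * p ^ (j + 1) * p ^ (j + 1) * (w * r) ^ 2 := by ring
    have e2 : r * (2 * α * x + β) = 1 - s * p := by linarith
    rw [e, hw, e2]
    ring

/-- representative in `[1,q]` -/
lemma exists_rep (q : ℕ) (hq : 0 < q) (x : ℤ) :
    ∃ a : ℕ, 1 ≤ a ∧ a ≤ q ∧ (q : ℤ) ∣ (a : ℤ) - x := by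
  have hq' : (0 : ℤ) < q := by exact_mod_cast hq
  have h1 := Int.emod_nonneg (x - 1) hq'.ne'
  have h2 := Int.emod_lt_of_pos (x - 1) hq'
  refine ⟨((x - 1) % q + 1).toNat, by omega, by omega, ?_⟩
  rw [Int.toNat_of_nonneg (by omega)]
  refine ⟨-((x - 1) / q), ?_⟩
  have := Int.emod_add_mul_ediv (x - 1) q
  linarith [this, mul_neg (q : ℤ) ((x - 1) / q)]

lemma bound9 (m K x : ℕ) (hm : m < 3 ^ (K + 1)) (h : 9 * x ≤ m ^ 2 + 9) : x ≤ 9 ^ K + 1 := by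
  have h1 : m ^ 2 < (3 ^ (K + 1)) ^ 2 := Nat.pow_lt_pow_left hm (by norm_num)
  have : (3 ^ (K + 1)) ^ 2 = 9 * 9 ^ K := by
    rw [← pow_mul, mul_comm, pow_mul]; norm_num [pow_succ]; ring
  omega

lemma two_case (j r K : ℕ) (hr : r % 2 = 1) (hr3 : r = 1 ∨ 3 ≤ r)
    (hm : 2 ^ (j + 3) * r < 3 ^ (K + 1)) : Coll (2 ^ (j + 3) * r) (9 ^ K + 1) := by
  obtain ⟨x, hx, -⟩ := hensel 2 Nat.prime_two 3 (3 + 6 * (r : ℤ) ^ 2)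
    (1 + 3 * (r : ℤ) ^ 2 + 4 * ((r : ℤ) ^ 2) ^ 2) 0
    (by
      obtain ⟨s, rfl⟩ : ∃ s, r = 2 * s + 1 := ⟨r / 2, by omega⟩
      push_cast
      refine ⟨2 + 6 * s ^ 2 + 6 * s + 2 * (2 * s + 1) ^ 4, by ring⟩)
    (by
      intro h
      have : ((2 : ℕ) : ℤ) ∣ 2 * (1 + 3 * (r : ℤ) ^ 2) := Dvd.intro _ rfl
      have := dvd_sub h this
      ring_nf at this
      norm_num at this)
    (2 * (j + 1) - 1)
  have e : 2 * (j + 1) - 1 + 1 = 2 * (j + 1) := by omega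
  rw [e] at hx
  obtain ⟨H, hH⟩ : ∃ H : ℕ, H = 2 ^ (2 * (j + 1)) := ⟨_, rfl⟩
  have hH4 : 4 ≤ H := by
    rw [hH, pow_mul]
    calc 4 = (2 ^ 2) ^ 1 := by norm_num
      _ ≤ _ := Nat.pow_le_pow_right (by norm_num) (by omega)
  have h4H : 4 ∣ H := by rw [hH, pow_mul]; exact dvd_pow_self _ (by omega)
  have hM : (2 ^ (j + 3) * r) ^ 2 = 16 * H * r ^ 2 := by
    rw [hH]; ring
  have hxH : (H : ℤ) ∣ 3 * x ^ 2 + (3 + 6 * (r : ℤ) ^ 2) * x +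
    (1 + 3 * (r : ℤ) ^ 2 + 4 * ((r : ℤ) ^ 2) ^ 2) := by
    rw [hH]; exact_mod_cast hx
  -- natural-number version: any y congruent works
  have key : ∀ b : ℕ, (H : ℤ) ∣ 3 * (b : ℤ) ^ 2 + (3 + 6 * (r : ℤ) ^ 2) * b +
      (1 + 3 * (r : ℤ) ^ 2 + 4 * ((r : ℤ) ^ 2) ^ 2) →
      9 * (2 * b + 1 + 4 * r ^ 2) ≤ 16 * H * r ^ 2 + 9 → Coll (2 ^ (j + 3) * r) (9 ^ K + 1) := by
    intro b hb hle
    have hr0 : 0 < r ^ 2 := by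
      have : 0 < r := by omega
      positivity
    refine coll_of _ _ (2 * b + 1) (4 * r ^ 2) (by omega) (by omega)
      (bound9 _ _ _ hm (by rw [hM]; exact hle)) ?_
    rw [hM]
    have hb' : H ∣ 3 * b ^ 2 + (3 + 6 * r ^ 2) * b + (1 + 3 * r ^ 2 + 4 * (r ^ 2) ^ 2) := by
      exact_mod_cast hb
    obtain ⟨w, hw⟩ := hb'
    refine ⟨w, ?_⟩
    calc _ = 16 * r ^ 2 * (3 * b ^ 2 + (3 + 6 * r ^ 2) * b + (1 + 3 * r ^ 2 + 4 * (r ^ 2) ^ 2)) := by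
          ring
      _ = _ := by rw [hw]; ring
  obtain ⟨b1, hb1, hb2, z, hz⟩ := exists_rep H (by omega) (x + 1)
  obtain ⟨b, rfl⟩ : ∃ b, b1 = b + 1 := ⟨b1 - 1, by omega⟩
  have hbx : (b : ℤ) = x + H * z := by push_cast at hz; linarith
  have hbH : (H : ℤ) ∣ 3 * (b : ℤ) ^ 2 + (3 + 6 * (r : ℤ) ^ 2) * b +
      (1 + 3 * (r : ℤ) ^ 2 + 4 * ((r : ℤ) ^ 2) ^ 2) := by
    obtain ⟨w, hw⟩ := hxH
    refine ⟨w + 3 * (2 * x * z + H * z ^ 2) + (3 + 6 * (r : ℤ) ^ 2) * z, ?_⟩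
    rw [hbx]; linear_combination hw
  rcases hr3 with rfl | hr3
  · by_cases hb : b + b + 3 ≤ H
    · exact key b hbH (by omega)
    · by_cases hb3 : b + 3 ≤ H
      · obtain ⟨b', hb'⟩ : ∃ b', b + b' + 3 = H := ⟨H - 3 - b, by omega⟩
        refine key b' ?_ (by omega)
        have e : (b' : ℤ) = H - 3 - b := by omega
        obtain ⟨w, hw⟩ := hbH
        refine ⟨w + 3 * H - 6 * (3 + b) + 9, ?_⟩
        rw [e]; push_cast at hw ⊢; linear_combination hw
      · exfalso
        have hb4 : b + 1 = H ∨ b + 2 = H := by omega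
        have h4 : (4 : ℤ) ∣ H := by exact_mod_cast h4H
        obtain ⟨w, hw⟩ := h4
        have h5 := (Dvd.intro _ hw.symm).trans hbH
        rcases hb4 with h | h
        · have e : (b : ℤ) = 4 * w - 1 := by omega
          rw [e] at h5; ring_nf at h5; omega
        · have e : (b : ℤ) = 4 * w - 2 := by omega
          rw [e] at h5; ring_nf at h5; omega
  · refine key b hbH ?_
    have : 9 ≤ r ^ 2 := by nlinarith
    nlinarith [Nat.mul_le_mul (show 1 ≤ 16 * H - 36 by omega) this, Nat.sub_add_cancel (show 36 ≤ 16 * H by omega)]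

lemma two_one (i : ℕ) : Coll (2 * 3 ^ i) (9 ^ i + 1) := by
  refine coll_of _ _ 1 (9 ^ i) le_rfl (Nat.one_le_pow _ _ (by norm_num)) (by omega) ?_
  have : (2 * 3 ^ i) ^ 2 = 9 ^ i * 4 := by
    rw [mul_pow, ← pow_mul, mul_comm i, pow_mul]; norm_num; ring
  rw [this]
  apply Nat.mul_dvd_mul_left
  have h : 9 ^ i % 4 = 1 := by simp [Nat.pow_mod]
  obtain ⟨w, hw⟩ : ∃ w, 9 ^ i = 4 * w + 1 := ⟨9 ^ i / 4, by omega⟩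
  rw [hw]
  exact ⟨2 + 5 * w + 4 * w ^ 2, by ring⟩

lemma two_two (i : ℕ) : Coll (4 * 3 ^ i) (9 ^ (i + 1) + 1) := by
  have h1 : 1 ≤ 9 ^ i := Nat.one_le_pow _ _ (by norm_num)
  refine coll_of _ _ 6 (9 ^ i) (by norm_num) h1 (by rw [pow_succ]; omega) ?_
  have : (4 * 3 ^ i) ^ 2 = 9 ^ i * 16 := by
    rw [mul_pow, ← pow_mul, mul_comm i, pow_mul]; norm_num; ring
  rw [this]
  apply Nat.mul_dvd_mul_left
  have h : 9 ^ i % 8 = 1 := by simp [Nat.pow_mod]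
  obtain ⟨w, hw⟩ : ∃ w, 9 ^ i = 8 * w + 1 := ⟨9 ^ i / 8, by omega⟩
  rw [hw]
  exact ⟨8 + 10 * w + 4 * w ^ 2, by ring⟩

lemma rep_lemma (q : ℕ) (hq : 0 < q) (u v γ : ℤ) (hv : 0 < v) (huv : IsCoprime u v) :
    ∃ s t : ℤ, 0 ≤ s ∧ 0 ≤ t ∧ s < v ∧ v * t ≤ q + |u| * v ∧ (q : ℤ) ∣ u * s + v * t - γ := by
  have hq' : (0 : ℤ) < q := by exact_mod_cast hq
  obtain ⟨L, hL⟩ : ∃ L : ℤ, L = max u 0 * v := ⟨_, rfl⟩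
  obtain ⟨g, hg⟩ : ∃ g : ℤ, g = L + (γ - L) % q := ⟨_, rfl⟩
  have h1 := Int.emod_nonneg (γ - L) hq'.ne'
  have h2 := Int.emod_lt_of_pos (γ - L) hq'
  have hgγ : (q : ℤ) ∣ g - γ := by
    refine ⟨-((γ - L) / q), ?_⟩
    have := Int.emod_add_mul_ediv (γ - L) q
    rw [hg]; linarith [this, mul_neg (q : ℤ) ((γ - L) / q)]
  obtain ⟨x, y, hxy⟩ := huv
  have s1 := Int.emod_nonneg (g * x) hv.ne'
  have s2 := Int.emod_lt_of_pos (g * x) hv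
  have s3 := Int.emod_add_mul_ediv (g * x) v
  obtain ⟨s, hs⟩ : ∃ s : ℤ, s = (g * x) % v := ⟨_, rfl⟩
  obtain ⟨w, hw⟩ : ∃ w : ℤ, w = (g * x) / v := ⟨_, rfl⟩
  rw [← hs] at s1 s2 s3
  rw [← hw] at s3
  have ht : v * (g * y + u * w) = g - u * s := by
    have : s = g * x - v * w := by linarith
    rw [this]; linear_combination g * hxy
  have hge : u * s ≤ L ∧ L - u * s ≤ |u| * v := by
    rcases le_total 0 u with h | h
    · rw [hL, max_eq_left h, abs_of_nonneg h]; constructor <;> nlinarith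
    · rw [hL, max_eq_right h, abs_of_nonpos h]; constructor <;> nlinarith
  refine ⟨s, g * y + u * w, s1, ?_, s2, ?_, ?_⟩
  · have : 0 ≤ v * (g * y + u * w) := by rw [ht]; linarith
    exact nonneg_of_mul_nonneg_right this hv
  · rw [ht]; linarith
  · rw [ht]; convert hgγ using 1; ring

lemma rep_lemma' (q : ℕ) (hq : 0 < q) (u v γ : ℤ) (hv : v ≠ 0) (huv : IsCoprime u v)
    (hb : 9 * (|v| + |u| + 1) * |v| + 9 * q ≤ q * |v|) :
    ∃ s t : ℤ, 0 ≤ s ∧ 0 ≤ t ∧ 9 * (s + t + 2) ≤ q ∧ (q : ℤ) ∣ u * s + v * t - γ := by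
  have main : ∀ u v γ : ℤ, 0 < v → IsCoprime u v → 9 * (|v| + |u| + 1) * |v| + 9 * q ≤ q * |v| →
      ∃ s t : ℤ, 0 ≤ s ∧ 0 ≤ t ∧ 9 * (s + t + 2) ≤ q ∧ (q : ℤ) ∣ u * s + v * t - γ := by
    intro u v γ hv huv hb
    obtain ⟨s, t, hs, ht, hsv, hvt, hd⟩ := rep_lemma q hq u v γ hv huv
    refine ⟨s, t, hs, ht, ?_, hd⟩
    rw [abs_of_pos hv] at hb
    have : (9 * (s + t + 2)) * v ≤ q * v := by nlinarith
    exact le_of_mul_le_mul_right this hv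
  rcases lt_or_gt_of_ne hv with h | h
  · obtain ⟨s, t, hs, ht, h1, h2⟩ := main (-u) (-v) (-γ) (by linarith) huv.neg_neg
      (by simpa using hb)
    refine ⟨s, t, hs, ht, h1, ?_⟩
    rw [← dvd_neg, show -(u * s + v * t - γ) = -u * s + -v * t - -γ by ring]; exact h2
  · exact main u v γ h huv hb

lemma core (q : ℕ) (hq : 0 < q) (Ga Ge γ u v : ℤ) (hGa : IsCoprime Ga (q : ℤ))
    (hu : IsCoprime u (q : ℤ)) (huv : IsCoprime u v) (hd : (q : ℤ) ∣ u * Ge - v * Ga)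
    (hb : (v ≠ 0 ∧ 9 * (|v| + |u| + 1) * |v| + 9 * q ≤ q * |v|) ∨
      (u ≠ 0 ∧ 9 * (|u| + |v| + 1) * |u| + 9 * q ≤ q * |u|)) :
    ∃ s t : ℤ, 0 ≤ s ∧ 0 ≤ t ∧ 9 * (s + t + 2) ≤ q ∧ (q : ℤ) ∣ γ + Ga * s + Ge * t := by
  obtain ⟨x, y, hxy⟩ := hGa
  have H : ∃ s t : ℤ, 0 ≤ s ∧ 0 ≤ t ∧ 9 * (s + t + 2) ≤ q ∧
      (q : ℤ) ∣ u * s + v * t - (-γ * u * x) := by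
    rcases hb with ⟨h0, hb⟩ | ⟨h0, hb⟩
    · exact rep_lemma' q hq u v _ h0 huv hb
    · obtain ⟨s, t, hs, ht, h1, h2⟩ := rep_lemma' q hq v u (-γ * u * x) h0 huv.symm hb
      exact ⟨t, s, ht, hs, by linarith, by convert h2 using 1; ring⟩
  obtain ⟨s, t, hs, ht, h1, ⟨z, hz⟩⟩ := H
  refine ⟨s, t, hs, ht, h1, ?_⟩
  apply hu.symm.dvd_of_dvd_mul_left
  obtain ⟨d, hd⟩ := hd
  refine ⟨d * t + Ga * z + γ * u * y, ?_⟩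
  linear_combination t * hd + Ga * hz - γ * u * hxy

lemma hard (q c : ℕ) (hq : 0 < q) (hc : 1 ≤ c) (h6 : IsCoprime (6 : ℤ) q)
    (hcq : IsCoprime (c : ℤ) q) (Y E u v : ℤ) (hY : IsCoprime Y (q : ℤ))
    (hu : IsCoprime u (q : ℤ)) (huv : IsCoprime u v)
    (hG : (q : ℤ) ∣ 3 * Y ^ 2 + E ^ 2 + 4)
    (hd : (q : ℤ) ∣ u * c * (3 * Y + E) - 6 * v * Y)
    (hb : (v ≠ 0 ∧ 9 * (|v| + |u| + 1) * |v| + 9 * q ≤ q * |v|) ∨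
      (u ≠ 0 ∧ 9 * (|u| + |v| + 1) * |u| + 9 * q ≤ q * |u|)) :
    ∃ a e : ℕ, 1 ≤ a ∧ 1 ≤ e ∧ 9 * (a + c * e) ≤ c * q ^ 2 ∧
      q ^ 2 ∣ 3 * a ^ 2 + 3 * a * (c * e) + (c * e) ^ 2 + 1 := by
  have h2 : IsCoprime (2 : ℤ) q := IsCoprime.of_mul_left_left (y := 3) (by norm_num; exact h6)
  have h3 : IsCoprime (3 : ℤ) q := IsCoprime.of_mul_left_right (x := 2) (by norm_num; exact h6)
  have h4 : IsCoprime (4 : ℤ) q := by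
    have := h2.mul_left h2; norm_num at this; exact this
  obtain ⟨ci, ci', hci⟩ := id hcq
  obtain ⟨ti, ti', hti⟩ := id h2
  obtain ⟨e0, he1, heq, ⟨z1, hz1⟩⟩ := exists_rep q hq (ci * E)
  obtain ⟨a0, ha1, haq, ⟨z2, hz2⟩⟩ := exists_rep q hq (ti * (Y - E))
  have hE : ∃ k : ℤ, (c : ℤ) * e0 = E + q * k :=
    ⟨c * z1 - ci' * E, by linear_combination c * hz1 + E * hci⟩
  have hA : ∃ k : ℤ, 2 * (a0 : ℤ) = Y - E + q * k :=
    ⟨2 * z2 - ti' * (Y - E), by linear_combination 2 * hz2 + (Y - E) * hti⟩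
  obtain ⟨k1, hk1⟩ := hE
  obtain ⟨k2, hk2⟩ := hA
  have hG0 : (q : ℤ) ∣ 3 * a0 ^ 2 + 3 * a0 * (c * e0) + (c * e0) ^ 2 + 1 := by
    apply h4.symm.dvd_of_dvd_mul_left
    have e : (4 : ℤ) * (3 * a0 ^ 2 + 3 * a0 * (c * e0) + (c * e0) ^ 2 + 1)
      = 3 * (2 * a0 + c * e0) ^ 2 + (c * e0) ^ 2 + 4 := by ring
    have e2 : (2 : ℤ) * a0 + c * e0 = Y + q * (k1 + k2) := by linear_combination hk1 + hk2
    rw [e, e2, hk1]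
    obtain ⟨w, hw⟩ := hG
    exact ⟨w + 3 * (2 * Y * (k1 + k2) + q * (k1 + k2) ^ 2) + 2 * E * k1 + q * k1 ^ 2, by
      linear_combination hw⟩
  have eGa : (6 : ℤ) * a0 + 3 * (c * e0) = 3 * Y + q * (3 * (k1 + k2)) := by
    linear_combination 3 * hk1 + 3 * hk2
  obtain ⟨g, hg⟩ := hG0
  obtain ⟨s, t, hs, ht, hst, ⟨w, hw⟩⟩ := core q hq (6 * a0 + 3 * (c * e0))
    (3 * c * a0 + 2 * c * (c * e0)) g u v
    (by rw [eGa]; exact (h3.mul_left hY).add_mul_left_left _) hu huv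
    (by
      apply h2.symm.dvd_of_dvd_mul_left
      obtain ⟨d, hd⟩ := hd
      refine ⟨d + u * c * (3 * k2 + 4 * k1) - v * 6 * (k1 + k2), ?_⟩
      linear_combination hd + (3 * u * c - 6 * v) * hk2 + (4 * u * c - 6 * v) * hk1) hb
  lift s to ℕ using hs
  lift t to ℕ using ht
  refine ⟨a0 + q * s, e0 + q * t, by omega, by omega, ?_, ?_⟩
  · have hst' : 9 * (s + t + 2) ≤ q := by exact_mod_cast hst
    have i1 : a0 + q * s ≤ c * (q * (s + 1)) := by
      calc a0 + q * s ≤ q * (s + 1) := by nlinarith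
        _ ≤ _ := Nat.le_mul_of_pos_left _ hc
    have i2 : c * (e0 + q * t) ≤ c * (q * (t + 1)) := Nat.mul_le_mul_left _ (by nlinarith)
    calc 9 * (a0 + q * s + c * (e0 + q * t)) ≤ 9 * (c * (q * (s + 1)) + c * (q * (t + 1))) := by
          omega
      _ = (c * q) * (9 * (s + t + 2)) := by ring
      _ ≤ (c * q) * q := Nat.mul_le_mul_left _ hst'
      _ = _ := by ring
  · have : ((q : ℤ)) ^ 2 ∣ 3 * ((a0 + q * s : ℕ) : ℤ) ^ 2 + 3 * ((a0 + q * s : ℕ) : ℤ) *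
        (c * ((e0 + q * t : ℕ) : ℤ)) + (c * ((e0 + q * t : ℕ) : ℤ)) ^ 2 + 1 := by
      push_cast
      refine ⟨w + 3 * s ^ 2 + 3 * s * (c * t) + (c * t) ^ 2, ?_⟩
      linear_combination hg + q * hw
    exact_mod_cast this

lemma quad_roots {F : Type*} [Field F] [Fintype F] [DecidableEq F] (a b c : F)
    (h : ¬ (a = 0 ∧ b = 0)) :
    (Finset.univ.filter (fun t : F => a * t ^ 2 + b * t + c = 0)).card ≤ 2 := by
  open Polynomial in
  have hne : (C a * X ^ 2 + C b * X + C c : F[X]) ≠ 0 := by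
    intro h0
    apply h
    have h1 := congrArg (fun P => coeff P 2) h0
    have h2 := congrArg (fun P => coeff P 1) h0
    simp [coeff_C] at h1 h2
    exact ⟨h1, h2⟩
  have hsub : (Finset.univ.filter (fun t : F => a * t ^ 2 + b * t + c = 0)) ⊆
      (Polynomial.C a * Polynomial.X ^ 2 + Polynomial.C b * Polynomial.X +
        Polynomial.C c).roots.toFinset := by
    intro t ht
    simp only [Finset.mem_filter, Finset.mem_univ, true_and] at ht
    rw [Multiset.mem_toFinset, Polynomial.mem_roots hne]
    simpa [Polynomial.IsRoot] using ht
  exact (Finset.card_le_card hsub).trans ((Multiset.toFinset_card_le _).trans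
    ((Polynomial.card_roots' _).trans Polynomial.natDegree_quadratic_le))

lemma conic (p : ℕ) [Fact p.Prime] (hp : 5 ≤ p) (S : Finset (ZMod p × ZMod p))
    (hS : ∀ x ∈ S, ¬ (x.1 = 0 ∧ x.2 = 0)) (hc : 2 * S.card + 2 < p) :
    ∃ Y E : ZMod p, 3 * Y ^ 2 + E ^ 2 + 4 = 0 ∧ ∀ x ∈ S, x.1 * Y + x.2 * E ≠ 0 := by
  have hpp : p.Prime := Fact.out
  have h2 : (2 : ZMod p) ≠ 0 := by
    intro h
    have : ((2 : ℕ) : ZMod p) = 0 := by exact_mod_cast h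
    rw [ZMod.natCast_eq_zero_iff] at this
    have := Nat.le_of_dvd (by norm_num) this; omega
  have h3 : (3 : ZMod p) ≠ 0 := by
    intro h
    have : ((3 : ℕ) : ZMod p) = 0 := by exact_mod_cast h
    rw [ZMod.natCast_eq_zero_iff] at this
    have := Nat.le_of_dvd (by norm_num) this; omega
  have h4 : (4 : ZMod p) ≠ 0 := by
    rw [show (4 : ZMod p) = 2 * 2 by norm_num]; exact mul_ne_zero h2 h2
  obtain ⟨Y0, E0, h0⟩ : ∃ Y E : ZMod p, 3 * Y ^ 2 + E ^ 2 + 4 = 0 := by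
    obtain ⟨a, b, hab⟩ := FiniteField.exists_root_sum_quadratic (R := ZMod p)
      (f := Polynomial.C 3 * Polynomial.X ^ 2 + Polynomial.C 0 * Polynomial.X + Polynomial.C 4)
      (g := Polynomial.C 1 * Polynomial.X ^ 2 + Polynomial.C 0 * Polynomial.X + Polynomial.C 0)
      (Polynomial.degree_quadratic h3) (Polynomial.degree_quadratic one_ne_zero)
      (by
        rw [ZMod.card]
        rcases hpp.eq_two_or_odd with h | h
        · omega
        · exact h)
    refine ⟨a, b, ?_⟩
    simp at hab
    linear_combination hab
  classical
  let bad : ZMod p × ZMod p → Finset (ZMod p) := fun x => Finset.univ.filter (fun t : ZMod p =>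
    (x.1 * Y0 - x.2 * E0) * t ^ 2 + (-(2 * x.1 * E0 + 6 * x.2 * Y0)) * t
      + 3 * (x.2 * E0 - x.1 * Y0) = 0)
  let bad0 : Finset (ZMod p) := Finset.univ.filter (fun t : ZMod p => 1 * t ^ 2 + 0 * t + 3 = 0)
  have hb0 : bad0.card ≤ 2 := quad_roots _ _ _ (by simp)
  have hb : ∀ x ∈ S, (bad x).card ≤ 2 := by
    intro x hx
    apply quad_roots
    rintro ⟨e1, e2⟩
    have e3 : x.2 * 4 = 0 := by
      have : 2 * (x.2 * 4) = 0 := by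
        linear_combination 2 * x.2 * h0 + (2 * E0) * e1 + Y0 * e2
      exact (mul_eq_zero.1 this).resolve_left h2
    have e4 : x.2 = 0 := (mul_eq_zero.1 e3).resolve_right h4
    rw [e4] at e1 e2
    have e5 : x.1 * Y0 = 0 := by linear_combination e1
    have e6 : x.1 * E0 = 0 := by
      have : 2 * (x.1 * E0) = 0 := by linear_combination -e2
      exact (mul_eq_zero.1 this).resolve_left h2
    have e7 : x.1 * 4 = 0 := by
      linear_combination x.1 * h0 - 3 * Y0 * e5 - E0 * e6
    exact hS x hx ⟨(mul_eq_zero.1 e7).resolve_right h4, e4⟩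
  have hcard : (S.biUnion bad ∪ bad0).card < (Finset.univ : Finset (ZMod p)).card := by
    rw [Finset.card_univ, ZMod.card]
    have i1 := Finset.card_union_le (S.biUnion bad) bad0
    have i2 := Finset.card_biUnion_le_card_mul S bad 2 hb
    omega
  obtain ⟨t, -, ht⟩ := Finset.exists_mem_notMem_of_card_lt_card hcard
  simp only [Finset.mem_union, Finset.mem_biUnion, not_or, not_exists, not_and] at ht
  obtain ⟨ht1, ht2⟩ := ht
  have ht3 : t ^ 2 + 3 ≠ 0 := by
    intro h; apply ht2; simp [bad0, h]
  refine ⟨(Y0 * (t ^ 2 - 3) - 2 * E0 * t) / (t ^ 2 + 3),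
    (E0 * (3 - t ^ 2) - 6 * Y0 * t) / (t ^ 2 + 3), ?_, ?_⟩
  · field_simp
    linear_combination (t ^ 2 + 3) ^ 2 * h0
  · intro x hx h
    apply ht1 x hx
    simp only [bad, Finset.mem_filter, Finset.mem_univ, true_and]
    field_simp at h
    linear_combination h

lemma thue (p n : ℕ) (hn : 0 < n) (hpn : p < (n + 1) ^ 2) (hp : 0 < p) (κ : ℤ) :
    ∃ u v : ℤ, 0 < u ∧ u ≤ n ∧ |v| ≤ n ∧ (p : ℤ) ∣ v - κ * u := by
  obtain ⟨j, k, hk, hkn, h⟩ := Real.exists_int_int_abs_mul_sub_le ((κ : ℝ) / p) hn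
  refine ⟨k, k * κ - j * p, hk, hkn, ?_, ⟨-j, by ring⟩⟩
  have hpr : (0 : ℝ) < p := by exact_mod_cast hp
  have e : ((k : ℝ) * κ - j * p) = (k * (κ / p) - j) * p := by field_simp
  have h1 : |(k : ℝ) * κ - j * p| ≤ 1 / (n + 1) * p := by
    rw [e, abs_mul, abs_of_pos hpr]; gcongr
  have h2 : 1 / ((n : ℝ) + 1) * p < n + 1 := by
    rw [one_div, inv_mul_lt_iff₀ (by positivity)]
    have : (p : ℝ) < (n + 1) ^ 2 := by exact_mod_cast hpn
    nlinarith
  have h3 : |k * κ - j * (p : ℤ)| < n + 1 := by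
    have := h1.trans_lt h2
    exact_mod_cast this
  linarith

lemma zmod_dvd (x : ℤ) (p : ℕ) : ((x : ℤ) : ZMod p) = 0 ↔ (p : ℤ) ∣ x :=
  ZMod.intCast_zmod_eq_zero_iff_dvd x p

lemma bnd (q x y : ℤ) (hx : 18 ≤ x) (hq : 0 ≤ q) (h : 18 * (x + y + 1) ≤ q) :
    9 * (x + y + 1) * x + 9 * q ≤ q * x := by
  have h1 := mul_le_mul_of_nonneg_right h (by omega : 0 ≤ x)
  have h2 := mul_le_mul_of_nonneg_left hx hq
  linarith

lemma zmod_small {p : ℕ} (x : ℤ) (h1 : |x| < p) (h : ((x : ℤ) : ZMod p) = 0) : x = 0 := by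
  rw [zmod_dvd] at h
  exact Int.eq_zero_of_abs_lt_dvd h h1

lemma coprime_zmod {p : ℕ} (hp : p.Prime) (x : ℤ) (h : ((x : ℤ) : ZMod p) ≠ 0) (j : ℕ) :
    IsCoprime x (((p ^ (j + 1) : ℕ)) : ℤ) := by
  push_cast
  apply IsCoprime.pow_right
  rw [isCoprime_comm, Prime.coprime_iff_not_dvd (Nat.prime_iff_prime_int.1 hp)]
  intro h'
  exact h ((zmod_dvd _ _).2 h')

lemma zmod_ne (p : ℕ) (hp : p.Prime) (h5 : 5 ≤ p) :
    (2 : ZMod p) ≠ 0 ∧ (3 : ZMod p) ≠ 0 ∧ (6 : ZMod p) ≠ 0 := by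
  have := Fact.mk hp
  have h2 : (2 : ZMod p) ≠ 0 := by
    intro h
    have : ((2 : ℕ) : ZMod p) = 0 := by exact_mod_cast h
    rw [ZMod.natCast_eq_zero_iff] at this
    have := Nat.le_of_dvd (by norm_num) this; omega
  have h3 : (3 : ZMod p) ≠ 0 := by
    intro h
    have : ((3 : ℕ) : ZMod p) = 0 := by exact_mod_cast h
    rw [ZMod.natCast_eq_zero_iff] at this
    have := Nat.le_of_dvd (by norm_num) this; omega
  refine ⟨h2, h3, ?_⟩
  rw [show (6 : ZMod p) = 2 * 3 by norm_num]; exact mul_ne_zero h2 h3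

lemma hard_prime (p c : ℕ) (hp : p.Prime) (h : 1369 ≤ p) (hc : 1 ≤ c) (hpc : ¬ p ∣ c) :
    ∃ a e : ℕ, 1 ≤ a ∧ 1 ≤ e ∧ 9 * (a + c * e) ≤ c * p ^ 2 ∧
      p ^ 2 ∣ 3 * a ^ 2 + 3 * a * (c * e) + (c * e) ^ 2 + 1 := by
  have := Fact.mk hp
  obtain ⟨h2, h3, h6⟩ := zmod_ne p hp (by omega)
  have hc0 : (c : ZMod p) ≠ 0 := by rwa [Ne, ZMod.natCast_eq_zero_iff]
  classical
  let P : Finset (ℤ × ℤ) := ((Finset.Icc 0 17) ×ˢ (Finset.Icc (-17) 17)).filter (fun x => x ≠ (0, 0))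
  have hP : P.card ≤ 630 := (Finset.card_filter_le _ _).trans (by simp)
  let f : ℤ × ℤ → ZMod p × ZMod p := fun x => (3 * (x.1 : ZMod p) * c - 6 * (x.2 : ZMod p), x.1 * c)
  obtain ⟨Y, E, hYE, hav⟩ := conic p (by omega) (P.image f)
    (by
      intro x hx
      rw [Finset.mem_image] at hx
      obtain ⟨⟨u, v⟩, huv, rfl⟩ := hx
      simp only [P, Finset.mem_filter, Finset.mem_product, Finset.mem_Icc] at huv
      rintro ⟨e1, e2⟩
      simp only [f] at e1 e2
      have e3 : (u : ZMod p) = 0 := (mul_eq_zero.1 e2).resolve_right hc0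
      have e4 : (v : ZMod p) = 0 := by
        rw [e3] at e1
        have : (6 : ZMod p) * v = 0 := by linear_combination -e1
        exact (mul_eq_zero.1 this).resolve_left h6
      have e5 := zmod_small u (by rw [abs_lt]; omega) e3
      have e6 := zmod_small v (by rw [abs_lt]; omega) e4
      exact huv.2 (by rw [e5, e6]))
    (by
      have := Finset.card_image_le (s := P) (f := f)
      omega)
  have hav' : ∀ u v : ℤ, 0 ≤ u → u ≤ 17 → |v| ≤ 17 → (u, v) ≠ (0, 0) →
      (u : ZMod p) * c * (3 * Y + E) - 6 * v * Y ≠ 0 := by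
    intro u v hu1 hu2 hv h0 he
    rw [abs_le] at hv
    refine hav (f (u, v)) (Finset.mem_image_of_mem _ ?_) ?_
    · simp only [P, Finset.mem_filter, Finset.mem_product, Finset.mem_Icc]
      exact ⟨⟨⟨hu1, hu2⟩, hv⟩, h0⟩
    · simp only [f]; linear_combination he
  have hY : Y ≠ 0 := by
    intro hY
    apply hav' 0 1 (by norm_num) (by norm_num) (by norm_num) (by simp)
    rw [hY]; simp
  obtain ⟨κ, hκ⟩ := ZMod.intCast_surjective ((c : ZMod p) * (3 * Y + E) / (6 * Y))
  have hκ' : (c : ZMod p) * (3 * Y + E) = 6 * κ * Y := by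
    rw [hκ]; field_simp
  obtain ⟨Yz, rfl⟩ := ZMod.intCast_surjective Y
  obtain ⟨Ez, rfl⟩ := ZMod.intCast_surjective E
  obtain ⟨n, hn⟩ : ∃ n, n = Nat.sqrt p := ⟨_, rfl⟩
  have hn1 : n * n ≤ p := by rw [hn]; exact Nat.sqrt_le p
  have hn2 : p < (n + 1) * (n + 1) := by rw [hn]; exact Nat.lt_succ_sqrt p
  have hn37 : 37 ≤ n := by by_contra h'; have : n + 1 ≤ 37 := by omega
                           have := Nat.mul_le_mul this this; omega
  obtain ⟨u, v, hu, hun, hvn, hd⟩ := thue p n (by omega) (by rw [pow_two]; exact hn2) (by omega) κ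
  have hg0 : 0 < Int.gcd u v := Int.gcd_pos_of_ne_zero_left _ hu.ne'
  obtain ⟨g, u', v', hgpos, hcop, hu', hv'⟩ := Int.exists_gcd_one' hg0
  have hg1 : (1 : ℤ) ≤ g := by exact_mod_cast hgpos
  have hu'pos : 0 < u' := by
    rw [hu'] at hu; exact pos_of_mul_pos_left hu (by omega)
  have hu'n : u' ≤ n := by nlinarith
  have hv'n : |v'| ≤ n := by
    rw [hv', abs_mul, abs_of_nonneg (by omega : (0 : ℤ) ≤ g)] at hvn
    nlinarith [abs_nonneg v']
  have hnp : (n : ℤ) < p := by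
    have : n < p := by nlinarith
    exact_mod_cast this
  have hgne : ((g : ℤ) : ZMod p) ≠ 0 := by
    intro h'
    have := zmod_small (g : ℤ) (by rw [abs_of_nonneg (by omega)]; nlinarith) h'
    omega
  have hu'ne : ((u' : ℤ) : ZMod p) ≠ 0 := by
    intro h'
    have := zmod_small u' (by rw [abs_of_pos hu'pos]; omega) h'
    omega
  have hvκ : (v' : ZMod p) = κ * u' := by
    have h' := (zmod_dvd _ _).2 hd
    rw [hu', hv'] at h'
    push_cast at h' hgne
    have : (g : ZMod p) * (v' - κ * u') = 0 := by linear_combination h'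
    have := (mul_eq_zero.1 this).resolve_left hgne
    linear_combination this
  have hrel : (u' : ZMod p) * c * (3 * Yz + Ez) - 6 * v' * Yz = 0 := by
    rw [hvκ]; linear_combination (u' : ZMod p) * hκ'
  have hbig : 18 ≤ u' ∨ 18 ≤ |v'| := by
    by_contra hcon
    push Not at hcon
    refine hav' u' v' hu'pos.le (by omega) (by omega) ?_ hrel
    intro h'; rw [Prod.mk.injEq] at h'; omega
  have hn3 : (18 : ℤ) * (2 * n + 1) ≤ p := by
    have : 18 * (2 * n + 1) ≤ p := by nlinarith
    exact_mod_cast this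
  have hco := fun x hx => (by simpa using coprime_zmod hp x hx 0 : IsCoprime x (p : ℤ))
  refine hard p c (by omega) hc (hco 6 (by exact_mod_cast h6)) (hco c (by exact_mod_cast hc0))
    Yz Ez u' v' (hco _ hY) (hco _ hu'ne) (Int.isCoprime_iff_gcd_eq_one.2 hcop) ?_ ?_ ?_
  · rw [← zmod_dvd]; push_cast; exact hYE
  · rw [← zmod_dvd]; push_cast; exact hrel
  · rw [abs_of_pos hu'pos]
    rcases hbig with hb | hb
    · right
      refine ⟨hu'pos.ne', ?_⟩
      exact bnd _ _ _ hb (by omega) (by linarith)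
    · left
      refine ⟨by rintro rfl; simp at hb, ?_⟩
      exact bnd _ _ _ hb (by omega) (by linarith)

lemma hard_pow (p j c : ℕ) (hp : p.Prime) (h5 : 5 ≤ p) (hq : 18 * (21 + p) ≤ p ^ (j + 1))
    (hc : 1 ≤ c) (hpc : ¬ p ∣ c) :
    ∃ a e : ℕ, 1 ≤ a ∧ 1 ≤ e ∧ 9 * (a + c * e) ≤ c * (p ^ (j + 1)) ^ 2 ∧
      (p ^ (j + 1)) ^ 2 ∣ 3 * a ^ 2 + 3 * a * (c * e) + (c * e) ^ 2 + 1 := by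
  have := Fact.mk hp
  obtain ⟨h2, h3, h6⟩ := zmod_ne p hp (by omega)
  have hc0 : (c : ZMod p) ≠ 0 := by rwa [Ne, ZMod.natCast_eq_zero_iff]
  obtain ⟨Y, E, hYE, hav⟩ := conic p h5 {(1, 0)} (by simp) (by simp; omega)
  have hY : Y ≠ 0 := by simpa using hav
  obtain ⟨κ0, hκ0⟩ := ZMod.intCast_surjective ((c : ZMod p) * (3 * Y + E) / (6 * Y))
  have hκ' : (c : ZMod p) * (3 * Y + E) = 6 * κ0 * Y := by
    rw [hκ0]; field_simp
  obtain ⟨k, hk1, hk2, hk3⟩ := exists_rep p (by omega) (κ0 - 17)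
  obtain ⟨κ, hκ⟩ : ∃ κ : ℤ, κ = k + 17 := ⟨_, rfl⟩
  have hκκ : (κ : ZMod p) = κ0 := by
    have := (zmod_dvd _ _).2 hk3
    rw [hκ]; push_cast at this ⊢; linear_combination this
  have hcq := coprime_zmod hp c (by exact_mod_cast hc0) j
  obtain ⟨ci, ci', hci⟩ := id hcq
  obtain ⟨η, hη⟩ : ∃ η : ℤ, η = 6 * κ * ci - 3 := ⟨_, rfl⟩
  have hcip : (ci : ZMod p) * c = 1 := by
    have := congrArg (fun z : ℤ => (z : ZMod p)) hci
    simpa using this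
  have hηE : (η : ZMod p) * Y = E := by
    rw [hη]; push_cast; rw [hκκ]
    linear_combination -ci * hκ' + (3 * Y + E) * hcip
  obtain ⟨Y0, rfl⟩ := ZMod.intCast_surjective Y
  have hroot : (3 + (η : ZMod p) ^ 2) * Y0 ^ 2 + 0 * Y0 + 4 = 0 := by
    linear_combination hYE + (η * Y0 + E) * hηE
  obtain ⟨Yq, hYq, hYY⟩ := hensel p hp (3 + η ^ 2) 0 4 Y0
    (by rw [← zmod_dvd]; push_cast; exact hroot)
    (by
      rw [← zmod_dvd]; push_cast
      intro h'
      have : (2 : ZMod p) * 2 * 2 = 0 := by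
        linear_combination 2 * hroot - Y0 * h'
      simp [h2] at this) j
  have hYq0 : (Yq : ZMod p) ≠ 0 := by
    have := (zmod_dvd _ _).2 hYY
    push_cast at this
    rw [sub_eq_zero.1 this]; exact hY
  refine hard (p ^ (j + 1)) c (by positivity) hc (coprime_zmod hp 6 (by exact_mod_cast h6) j) hcq
    Yq (η * Yq) 1 κ (coprime_zmod hp _ hYq0 j) isCoprime_one_left isCoprime_one_left ?_ ?_ ?_
  · push_cast; convert hYq using 1; ring
  · refine ⟨-6 * κ * Yq * ci', ?_⟩
    rw [hη]; linear_combination 6 * κ * Yq * hci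
  · left
    refine ⟨by omega, ?_⟩
    rw [abs_of_nonneg (by omega : 0 ≤ κ), abs_one]
    have hq' : (18 : ℤ) * (21 + p) ≤ ((p ^ (j + 1) : ℕ) : ℤ) := by exact_mod_cast hq
    exact bnd _ _ _ (by omega) (by omega) (by omega)

lemma easy (p j c : ℕ) (hp : p.Prime) (h5 : 5 ≤ p) (hpc : ¬ p ∣ c) (hc : 1 ≤ c)
    (hb : 9 * (p ^ (j + 1)) ^ 2 + 9 * (c * ((p - 1) / 2)) ≤ c * (p ^ (j + 1)) ^ 2 + 9) :
    ∃ a e : ℕ, 1 ≤ a ∧ 1 ≤ e ∧ 9 * (a + c * e) ≤ c * (p ^ (j + 1)) ^ 2 + 9 ∧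
      (p ^ (j + 1)) ^ 2 ∣ 3 * a ^ 2 + 3 * a * (c * e) + (c * e) ^ 2 + 1 := by
  have := Fact.mk hp
  obtain ⟨h2, h3, h6⟩ := zmod_ne p hp (by omega)
  have hodd : p % 2 = 1 := by
    rcases hp.eq_two_or_odd with h | h
    · omega
    · exact h
  have hc0 : (c : ZMod p) ≠ 0 := by rwa [Ne, ZMod.natCast_eq_zero_iff]
  obtain ⟨Y, E, hYE, hY, hE⟩ : ∃ Y E : ZMod p, 3 * Y ^ 2 + E ^ 2 + 4 = 0 ∧ Y ≠ 0 ∧ E ≠ 0 := by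
    by_cases hp5 : p = 5
    · subst hp5
      have h20 : ((20 : ℕ) : ZMod 5) = 0 := (ZMod.natCast_eq_zero_iff _ _).2 (by norm_num)
      push_cast at h20
      exact ⟨2, 2, by linear_combination h20, h2, h2⟩
    · have hp6 : p ≠ 6 := by rintro rfl; omega
      obtain ⟨Y, E, hYE, hav⟩ := conic p h5 {(1, 0), (0, 1)} (by simp)
        (by
          have := Finset.card_le_two (a := ((1, 0) : ZMod p × ZMod p)) (b := (0, 1))
          omega)
      refine ⟨Y, E, hYE, ?_, ?_⟩
      · simpa using hav (1, 0) (by simp)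
      · simpa using hav (0, 1) (by simp)
  obtain ⟨e, he1, he2, hYe⟩ : ∃ e : ℕ, 1 ≤ e ∧ e ≤ (p - 1) / 2 ∧
      3 * Y ^ 2 + ((c : ZMod p) * e) ^ 2 + 4 = 0 := by
    have hlt := ZMod.val_lt (E / (c : ZMod p))
    have hne : (E / (c : ZMod p)).val ≠ 0 := by
      rw [Ne, ZMod.val_eq_zero]; exact div_ne_zero hE hc0
    have hv : (c : ZMod p) * ((E / (c : ZMod p)).val : ZMod p) = E := by
      rw [ZMod.natCast_zmod_val]; field_simp
    by_cases hle : (E / (c : ZMod p)).val ≤ (p - 1) / 2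
    · exact ⟨(E / (c : ZMod p)).val, by omega, hle, by rw [hv]; exact hYE⟩
    · refine ⟨p - (E / (c : ZMod p)).val, by omega, by omega, ?_⟩
      rw [Nat.cast_sub hlt.le, ZMod.natCast_self, zero_sub, mul_neg, hv, neg_sq]; exact hYE
  obtain ⟨a0, ha0⟩ := ZMod.intCast_surjective ((Y - (c : ZMod p) * (e : ZMod p)) / 2)
  have ha0' : (2 : ZMod p) * a0 = Y - c * e := by rw [ha0]; field_simp
  obtain ⟨x, hx, -⟩ := hensel p hp 3 (3 * (c * e)) ((c * e) ^ 2 + 1) a0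
    (by
      rw [← zmod_dvd]; push_cast
      have : (2 : ZMod p) * 2 * (3 * a0 ^ 2 + 3 * (c * e) * a0 + ((c * e) ^ 2 + 1)) = 0 := by
        linear_combination hYe + 3 * (2 * a0 + c * e + Y) * ha0'
      simpa [h2] using this)
    (by
      rw [← zmod_dvd]; push_cast
      intro h'
      have : (3 : ZMod p) * Y = 0 := by linear_combination h' - 3 * ha0'
      simp [h3, hY] at this) (2 * (j + 1) - 1)
  have e1 : 2 * (j + 1) - 1 + 1 = (j + 1) * 2 := by omega
  rw [e1, pow_mul] at hx
  obtain ⟨a, ha1, ha2, ⟨z, hz⟩⟩ := exists_rep ((p ^ (j + 1)) ^ 2) (by positivity) x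
  refine ⟨a, e, ha1, he1, ?_, ?_⟩
  · have := Nat.mul_le_mul_left c he2
    omega
  · have : ((p : ℤ) ^ (j + 1)) ^ 2 ∣ 3 * (a : ℤ) ^ 2 + 3 * a * (c * e) + (c * e) ^ 2 + 1 := by
      obtain ⟨w, hw⟩ := hx
      push_cast at hz
      have hz' : (a : ℤ) = x + ((p : ℤ) ^ (j + 1)) ^ 2 * z := by linarith
      refine ⟨w + 3 * (2 * x * z + ((p : ℤ) ^ (j + 1)) ^ 2 * z ^ 2) + 3 * (c * e) * z, ?_⟩
      rw [hz']; linear_combination hw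
    exact_mod_cast this

/-- Lower approximation of the base-3 logarithm. -/
def lg (m : ℕ) : ℕ :=
  if m ≤ 9 then 1 else if m ≤ 27 then 2 else if m ≤ 81 then 3 else if m ≤ 243 then 4
  else if m ≤ 729 then 5 else if m ≤ 2187 then 6 else 7

/-- Checks that `(a, a + d)` is a collision for `m`. -/
def chk (m a d : ℕ) : Bool :=
  Nat.ble 1 a && Nat.ble 1 d && Nat.ble (3 ^ lg m) m && Nat.ble (a + d) (9 ^ lg m + 1) &&
    Nat.beq (d * (3 * a ^ 2 + 3 * a * d + d ^ 2 + 1) % m ^ 2) 0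

lemma coll_of_chk (m a d K : ℕ) (h : chk m a d = true) (hm : m < 3 ^ (K + 1)) :
    Coll m (9 ^ K + 1) := by
  simp only [chk, Bool.and_eq_true, Nat.ble_eq, Nat.beq_eq] at h
  obtain ⟨⟨⟨⟨h1, h2⟩, h3⟩, h4⟩, h5⟩ := h
  have hK : lg m ≤ K := by
    have := h3.trans_lt hm
    have := (Nat.pow_lt_pow_iff_right (by norm_num : 1 < 3)).1 this
    omega
  refine coll_of m _ a d h1 h2 (h4.trans ?_) (Nat.dvd_of_mod_eq_zero h5)
  have := Nat.pow_le_pow_right (by norm_num : 0 < 9) hK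
  omega

/-- Explicit collisions for `q`, `2 q` and `3 q`, where `q` is a small prime power. -/
def tbl : List (ℕ × ℕ × ℕ × ℕ × ℕ × ℕ × ℕ) :=
  [(5, 3, 2, 3, 2, 7, 18), (7, 3, 5, 3, 7, 8, 9), (11, 1, 14, 1, 14, 5, 27),
  (13, 8, 5, 2, 13, 60, 18), (17, 8, 11, 21, 13, 26, 18), (19, 15, 1, 14, 15, 7, 27),
  (23, 13, 11, 34, 7, 29, 45), (29, 37, 20, 37, 20, 7, 81), (31, 38, 4, 38, 4, 24, 180),
  (37, 7, 37, 35, 15, 63, 9), (41, 15, 34, 15, 34, 246, 9), (43, 10, 43, 10, 43, 25, 189),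
  (47, 16, 41, 13, 46, 118, 90), (53, 28, 74, 75, 42, 139, 9), (59, 41, 14, 41, 14, 152, 36),
  (61, 40, 19, 9, 61, 332, 99), (67, 25, 67, 70, 32, 256, 90), (71, 72, 38, 98, 35, 87, 81),
  (73, 36, 12, 36, 12, 201, 162), (79, 64, 1, 19, 82, 250, 54), (83, 130, 11, 130, 11, 293, 63),
  (89, 64, 17, 55, 34, 272, 378), (97, 16, 72, 16, 72, 16, 72), (101, 163, 42, 163, 42, 152, 63),
  (103, 77, 14, 77, 14, 297, 153), (107, 39, 89, 159, 31, 289, 342),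
  (109, 65, 46, 65, 46, 56, 306), (113, 71, 41, 179, 11, 449, 423),
  (127, 48, 48, 48, 48, 71, 486), (131, 75, 61, 110, 112, 509, 72),
  (137, 96, 31, 155, 131, 577, 270), (139, 18, 139, 18, 139, 130, 801),
  (149, 80, 79, 11, 194, 412, 36), (151, 20, 120, 20, 120, 194, 612),
  (157, 64, 119, 113, 157, 318, 477), (163, 96, 71, 39, 163, 748, 234),
  (167, 119, 34, 119, 34, 234, 216), (173, 279, 7, 279, 7, 562, 90),
  (179, 64, 151, 226, 276, 580, 702), (181, 28, 181, 121, 165, 418, 459),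
  (191, 135, 41, 21, 238, 245, 198), (193, 8, 193, 279, 71, 477, 90),
  (197, 77, 155, 42, 376, 371, 909), (199, 111, 98, 111, 98, 149, 153),
  (211, 155, 34, 155, 34, 651, 990), (223, 104, 48, 104, 48, 994, 963),
  (227, 350, 41, 350, 41, 40, 657), (229, 96, 169, 45, 254, 957, 99),
  (233, 144, 89, 262, 76, 476, 18), (239, 258, 251, 258, 251, 444, 387),
  (241, 70, 241, 70, 241, 127, 1080), (251, 21, 323, 58, 472, 116, 999),
  (257, 335, 164, 335, 164, 487, 207), (263, 197, 35, 239, 356, 477, 252),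
  (269, 502, 114, 277, 562, 182, 684), (271, 179, 82, 179, 82, 71, 432),
  (277, 177, 95, 170, 277, 325, 342), (281, 176, 103, 881, 73, 472, 81),
  (283, 169, 119, 163, 130, 1909, 531), (293, 127, 209, 748, 192, 513, 531),
  (307, 114, 307, 114, 307, 169, 1179), (311, 71, 329, 62, 785, 1589, 189),
  (313, 124, 108, 124, 108, 124, 108), (317, 163, 181, 71, 788, 839, 765),
  (331, 21, 331, 482, 115, 46, 1944), (337, 422, 26, 198, 337, 195, 360),
  (347, 435, 590, 435, 590, 281, 945), (349, 151, 349, 198, 349, 998, 135),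
  (353, 232, 109, 34, 947, 314, 1377), (359, 362, 196, 362, 196, 719, 486),
  (367, 253, 91, 178, 367, 1269, 504), (373, 227, 149, 53, 446, 570, 396),
  (379, 209, 191, 287, 379, 128, 1170), (383, 232, 155, 177, 254, 1823, 54),
  (389, 209, 206, 209, 206, 900, 432), (397, 307, 34, 307, 34, 804, 1395),
  (401, 249, 151, 1274, 71, 516, 1053), (409, 120, 389, 411, 120, 84, 1791),
  (419, 189, 286, 189, 286, 685, 540), (421, 154, 421, 154, 421, 682, 1125),
  (431, 296, 109, 71, 1111, 265, 1611), (433, 344, 19, 611, 188, 1393, 369),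
  (439, 32, 439, 593, 241, 1414, 252), (443, 728, 159, 1269, 70, 3003, 459),
  (449, 448, 254, 207, 1098, 207, 1098), (457, 208, 108, 208, 108, 208, 108),
  (461, 309, 131, 231, 274, 1732, 1044), (463, 140, 463, 450, 165, 1988, 198),
  (467, 272, 209, 227, 290, 1071, 1422), (479, 522, 188, 522, 188, 2270, 963),
  (487, 36, 432, 36, 432, 36, 432), (491, 739, 124, 739, 124, 352, 1908),
  (499, 320, 169, 498, 153, 498, 153), (503, 1123, 465, 226, 1464, 857, 954),
  (509, 400, 31, 271, 274, 1691, 45), (521, 127, 1279, 127, 1279, 572, 954),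
  (523, 363, 125, 249, 334, 432, 963), (541, 94, 541, 94, 541, 1689, 2142),
  (547, 27, 547, 27, 547, 647, 666), (557, 700, 38, 889, 41, 600, 783),
  (563, 307, 290, 307, 290, 1077, 855), (569, 449, 31, 115, 626, 488, 1017),
  (571, 73, 571, 561, 192, 2674, 819), (577, 50, 577, 50, 577, 375, 1233),
  (587, 379, 194, 379, 194, 1121, 1269), (593, 461, 46, 461, 46, 1762, 783),
  (599, 344, 277, 210, 1012, 996, 486), (601, 220, 240, 220, 240, 40, 540),
  (607, 437, 115, 62, 607, 3222, 18), (613, 670, 75, 670, 75, 290, 765),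
  (617, 167, 610, 167, 610, 1366, 117), (619, 38, 619, 38, 619, 2016, 135),
  (631, 29, 631, 706, 45, 706, 45), (641, 216, 563, 1007, 79, 941, 1881),
  (643, 96, 643, 462, 688, 2114, 1089), (647, 798, 74, 855, 391, 1131, 1584),
  (653, 740, 202, 1354, 303, 1301, 405), (659, 216, 589, 889, 364, 888, 1872),
  (661, 405, 259, 537, 432, 537, 432), (673, 352, 72, 352, 72, 352, 72),
  (677, 870, 8, 870, 8, 906, 3870), (683, 1066, 684, 1066, 684, 1066, 684),
  (691, 441, 238, 441, 238, 2731, 900), (701, 169, 727, 907, 460, 1719, 819),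
  (709, 321, 709, 321, 709, 2679, 3528), (719, 456, 253, 311, 514, 1272, 81),
  (727, 352, 132, 352, 132, 1849, 1890), (733, 512, 169, 267, 610, 3053, 954),
  (739, 938, 32, 938, 32, 1272, 153), (743, 27, 1010, 27, 1010, 2631, 1233),
  (751, 202, 751, 202, 751, 2617, 2745), (757, 234, 757, 234, 757, 585, 3096),
  (761, 549, 142, 549, 142, 564, 1854), (769, 16, 769, 753, 769, 3758, 801),
  (773, 1360, 486, 2394, 259, 1360, 486), (787, 825, 165, 825, 165, 1839, 3915),
  (797, 209, 799, 1121, 353, 2220, 3762), (809, 742, 578, 1125, 678, 123, 4095),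
  (811, 87, 811, 87, 811, 2346, 261), (821, 571, 194, 571, 194, 2352, 36),
  (823, 158, 823, 158, 823, 2657, 1485), (827, 13, 1150, 13, 1150, 1594, 252),
  (829, 379, 557, 797, 312, 418, 2340), (839, 405, 526, 405, 526, 1529, 1944),
  (853, 147, 853, 770, 632, 1120, 837), (857, 363, 626, 363, 626, 1088, 909),
  (859, 640, 121, 399, 859, 672, 2034), (863, 403, 565, 1526, 528, 70, 3006),
  (877, 699, 34, 699, 34, 256, 6462), (881, 1008, 254, 633, 1782, 633, 1782),
  (883, 225, 883, 658, 883, 3038, 369), (887, 872, 526, 1259, 371, 1654, 765),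
  (907, 46, 907, 46, 907, 4764, 2466), (911, 1150, 52, 1150, 52, 728, 1719),
  (919, 645, 206, 645, 206, 1298, 1170), (929, 1150, 98, 1057, 1206, 1057, 1206),
  (937, 384, 300, 384, 300, 5934, 2610), (941, 344, 781, 337, 2140, 2120, 1152),
  (947, 348, 1574, 2181, 12, 1961, 1773), (953, 441, 631, 1214, 661, 814, 2142),
  (967, 95, 967, 95, 967, 1083, 4419), (971, 664, 251, 369, 782, 2139, 1584),
  (977, 573, 430, 573, 430, 450, 2826), (983, 1250, 38, 998, 524, 1598, 3420),
  (991, 505, 574, 505, 574, 1148, 1710), (997, 203, 997, 794, 997, 3915, 2844),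
  (1009, 741, 163, 883, 543, 274, 1593), (1013, 618, 1274, 158, 2024, 2134, 405),
  (1019, 825, 14, 825, 14, 1695, 1260), (1021, 435, 1021, 586, 1021, 3530, 2070),
  (1031, 565, 526, 565, 526, 1278, 4509), (1033, 214, 1033, 214, 1033, 4847, 1089),
  (1039, 545, 574, 545, 574, 3736, 4104), (1049, 1703, 20, 1703, 20, 2231, 2457),
  (1051, 230, 1051, 230, 1051, 767, 2106), (1061, 522, 1546, 3047, 1414, 5348, 594),
  (1063, 721, 286, 721, 286, 633, 2367), (1069, 760, 221, 375, 914, 1192, 1431),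
  (1087, 747, 274, 747, 274, 534, 9783), (1091, 1150, 502, 3358, 68, 1663, 3096),
  (1093, 101, 1093, 101, 1093, 5046, 3141), (1097, 863, 65, 414, 2461, 1752, 3870),
  (1103, 677, 430, 677, 430, 4274, 1368), (1109, 736, 329, 2783, 1176, 2486, 2664),
  (1117, 792, 235, 825, 1117, 2149, 1674), (1123, 397, 955, 771, 1123, 2545, 1701),
  (1129, 661, 499, 118, 1129, 1923, 4059), (1151, 824, 227, 671, 514, 278, 3726),
  (1153, 384, 528, 384, 528, 89, 5274), (1163, 853, 190, 853, 190, 1999, 2907),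
  (1171, 896, 119, 110, 1171, 4757, 774), (1181, 861, 203, 159, 1426, 2265, 900),
  (1187, 881, 1948, 881, 1948, 1305, 4221), (1193, 1502, 76, 1502, 76, 2326, 837),
  (1201, 20, 1201, 1181, 1201, 6083, 3168), (1213, 145, 1213, 145, 1213, 4106, 306),
  (1217, 853, 275, 1105, 1649, 239, 7893), (1223, 597, 755, 1455, 1039, 2497, 3681),
  (1229, 629, 707, 1182, 1549, 3144, 4239), (1231, 944, 121, 326, 1231, 1768, 927),
  (1237, 913, 191, 179, 1474, 6361, 4131), (1249, 400, 600, 400, 600, 3263, 1080),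
  (1259, 2549, 338, 2549, 338, 2635, 1494), (1277, 1190, 878, 2590, 1367, 4264, 2601),
  (1279, 90, 1279, 90, 1279, 5781, 252), (1283, 978, 1274, 1021, 1988, 6034, 1791),
  (1289, 1458, 404, 1458, 404, 337, 6309), (1291, 231, 1291, 231, 1291, 1062, 2970),
  (1297, 621, 1297, 621, 1297, 2769, 2277), (1301, 469, 1091, 2107, 35, 4233, 1017),
  (1303, 716, 72, 716, 72, 716, 72), (1307, 783, 545, 661, 766, 1848, 3564),
  (1319, 770, 1718, 2585, 900, 2585, 900), (1321, 741, 643, 242, 1321, 4070, 1116),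
  (1327, 848, 455, 674, 1327, 6383, 54), (1361, 376, 1333, 1013, 2694, 421, 6561),
  (1367, 2037, 891, 2314, 1032, 2037, 891), (25, 8, 12, 8, 12, 75, 18),
  (49, 10, 21, 10, 21, 88, 126), (121, 126, 27, 126, 27, 126, 27),
  (169, 67, 65, 106, 156, 210, 117), (289, 189, 91, 15, 386, 833, 1458),
  (361, 43, 304, 43, 304, 338, 153), (529, 592, 178, 1160, 196, 248, 1287),
  (841, 616, 139, 209, 862, 1277, 2862), (125, 83, 37, 158, 89, 242, 36),
  (343, 53, 98, 53, 98, 878, 441)]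

/-- Checks one row of the table. -/
def chkRow (r : ℕ × ℕ × ℕ × ℕ × ℕ × ℕ × ℕ) : Bool :=
  match r with
  | (q, a1, d1, a2, d2, a3, d3) => chk q a1 d1 && chk (q * 2) a2 d2 && chk (q * 3) a3 d3

lemma tbl_ok : tbl.all chkRow = true := by decide +kernel

/-- `q` is a row label. -/
def inTbl (q : ℕ) : Bool := tbl.any (fun r => Nat.beq r.1 q)

lemma coll_of_tbl (q m' K : ℕ) (hq : inTbl q = true) (h0 : 0 < m') (h3 : m' ≤ 3)
    (hm : q * m' < 3 ^ (K + 1)) : Coll (q * m') (9 ^ K + 1) := by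
  simp only [inTbl, List.any_eq_true, Nat.beq_eq] at hq
  obtain ⟨⟨q', a1, d1, a2, d2, a3, d3⟩, hr, hq'⟩ := hq
  simp only at hq'
  subst hq'
  have := List.all_eq_true.1 tbl_ok _ hr
  simp only [chkRow, Bool.and_eq_true] at this
  obtain ⟨⟨c1, c2⟩, c3⟩ := this
  interval_cases m'
  · rw [mul_one] at hm ⊢; exact coll_of_chk _ _ _ _ c1 hm
  · exact coll_of_chk _ _ _ _ c2 hm
  · exact coll_of_chk _ _ _ _ c3 hm

/-- Detects a proper divisor among the primes below `37`. -/
def hasSmall (p : ℕ) : Bool :=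
  [2, 3, 5, 7, 11, 13, 17, 19, 23, 29, 31].any (fun f => Nat.blt f p && Nat.beq (p % f) 0)

lemma cover_bool : (List.range 1369).all (fun p => Nat.blt p 5 || hasSmall p || inTbl p) = true := by
  decide +kernel

lemma cover (p : ℕ) (hp : p.Prime) (h5 : 5 ≤ p) (h : p < 1369) : inTbl p = true := by
  have := List.all_eq_true.1 cover_bool p (List.mem_range.2 h)
  simp only [Bool.or_eq_true, Nat.blt_eq] at this
  rcases this with (h1 | h1) | h1
  · omega
  · exfalso
    simp only [hasSmall, List.any_eq_true, Bool.and_eq_true, Nat.blt_eq, Nat.beq_eq] at h1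
    obtain ⟨f, hf, hfp, hmod⟩ := h1
    rcases (Nat.dvd_prime hp).1 (Nat.dvd_of_mod_eq_zero hmod) with h' | h'
    · subst h'; simp at hf
    · omega
  · exact h1

lemma coll_finish (q m' K a e : ℕ) (hm : q * m' < 3 ^ (K + 1)) (h0 : 0 < m') (ha : 1 ≤ a)
    (he : 1 ≤ e) (hb : 9 * (a + m' ^ 2 * e) ≤ m' ^ 2 * q ^ 2 + 9)
    (hd : q ^ 2 ∣ 3 * a ^ 2 + 3 * a * (m' ^ 2 * e) + (m' ^ 2 * e) ^ 2 + 1) :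
    Coll (q * m') (9 ^ K + 1) := by
  refine coll_of _ _ a (m' ^ 2 * e) ha ?_ (bound9 _ _ _ hm ?_) ?_
  · have : 0 < m' ^ 2 * e := by positivity
    omega
  · rw [mul_pow, mul_comm (q ^ 2)]; exact hb
  · rw [mul_pow, mul_comm (q ^ 2)]
    exact mul_dvd_mul (Dvd.intro _ rfl) hd

lemma big_prime (p j m' K : ℕ) (hp : p.Prime) (h5 : 5 ≤ p) (hpm : ¬ p ∣ m')
    (hm : p ^ (j + 1) * m' < 3 ^ (K + 1)) : Coll (p ^ (j + 1) * m') (9 ^ K + 1) := by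
  have h0 : 0 < m' := by
    rcases Nat.eq_zero_or_pos m' with h | h
    · subst h; simp at hpm
    · exact h
  have hpc : ¬ p ∣ m' ^ 2 := fun h => hpm (hp.dvd_of_dvd_pow h)
  have hc : 1 ≤ m' ^ 2 := Nat.one_le_pow _ _ h0
  have hp6 : p ≠ 6 := by rintro rfl; norm_num at hp
  have hp8 : p ≠ 8 := by rintro rfl; norm_num at hp
  have hp9 : p ≠ 9 := by rintro rfl; norm_num at hp
  have hp10 : p ≠ 10 := by rintro rfl; norm_num at hp
  by_cases h3 : m' ≤ 3
  · by_cases hq : 18 * (21 + p) ≤ p ^ (j + 1)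
    · obtain ⟨a, e, ha, he, hb, hd⟩ := hard_pow p j (m' ^ 2) hp h5 hq hc hpc
      exact coll_finish _ _ _ a e hm h0 ha he (by omega) hd
    · by_cases hj : j = 0
      · subst hj
        simp only [zero_add, pow_one] at hm ⊢
        by_cases hbig : 1369 ≤ p
        · obtain ⟨a, e, ha, he, hb, hd⟩ := hard_prime p (m' ^ 2) hp hbig hc hpc
          exact coll_finish _ _ _ a e hm h0 ha he (by omega) hd
        · exact coll_of_tbl p m' K (cover p hp h5 (by omega)) h0 h3 hm
      · have hin : inTbl (p ^ (j + 1)) = true := by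
          have hp31 : p < 31 := by
            by_contra h31
            apply hq
            calc 18 * (21 + p) ≤ p ^ 2 := by nlinarith
              _ ≤ _ := Nat.pow_le_pow_right (by omega) (by omega)
          by_cases hj1 : j = 1
          · subst hj1
            interval_cases p <;> first | (exfalso; revert hp; norm_num; done) | decide +kernel
          · have hp11 : p < 11 := by
              by_contra h11
              apply hq
              calc 18 * (21 + p) ≤ 11 * 11 * p := by omega
                _ ≤ p * p * p := Nat.mul_le_mul_right _ (Nat.mul_le_mul (by omega) (by omega))
                _ = p ^ 3 := by ring
                _ ≤ _ := Nat.pow_le_pow_right (by omega) (by omega)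
            by_cases hj2 : j = 2
            · subst hj2
              interval_cases p <;> first | (exfalso; revert hp; norm_num; done) | decide +kernel
            · exfalso
              apply hq
              calc 18 * (21 + p) ≤ 5 ^ 4 := by omega
                _ ≤ p ^ 4 := Nat.pow_le_pow_left h5 _
                _ ≤ _ := Nat.pow_le_pow_right (by omega) (by omega)
        exact coll_of_tbl _ m' K hin h0 h3 hm
  · have hc16 : 16 ≤ m' ^ 2 := by nlinarith
    by_cases h20 : j = 0 ∧ p = 5 ∧ m' = 4
    · obtain ⟨rfl, rfl, rfl⟩ := h20
      exact coll_of_chk _ 10 3 _ (by decide +kernel) hm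
    by_cases h28 : j = 0 ∧ p = 7 ∧ m' = 4
    · obtain ⟨rfl, rfl, rfl⟩ := h28
      exact coll_of_chk _ 10 7 _ (by decide +kernel) hm
    have hb : 9 * (p ^ (j + 1)) ^ 2 + 9 * (m' ^ 2 * ((p - 1) / 2)) ≤
        m' ^ 2 * (p ^ (j + 1)) ^ 2 + 9 := by
      by_cases hs : j = 0 ∧ p ≤ 7
      · obtain ⟨rfl, hp7⟩ := hs
        have : p = 5 ∨ p = 7 := by omega
        rcases this with rfl | rfl
        · have : m' ≠ 5 := by rintro rfl; simp at hpm
          have : 6 ≤ m' := by omega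
          norm_num
          nlinarith
        · have : 5 ≤ m' := by omega
          norm_num
          nlinarith
      · have hQ : 72 * (p - 1) ≤ 7 * (p ^ (j + 1)) ^ 2 := by
          by_cases hj : j = 0
          · subst hj
            have : 11 ≤ p := by omega
            simp only [zero_add, pow_one]
            nlinarith [Nat.sub_le p 1]
          · calc 72 * (p - 1) ≤ 7 * (5 * 5 * p) := by omega
              _ ≤ 7 * (p * p * p) := by gcongr
              _ = 7 * p ^ 3 := by ring
              _ ≤ 7 * p ^ ((j + 1) * 2) := by
                apply Nat.mul_le_mul_left
                exact Nat.pow_le_pow_right (by omega) (by omega)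
              _ = _ := by rw [pow_mul]
        obtain ⟨Q, hQ'⟩ : ∃ Q, Q = (p ^ (j + 1)) ^ 2 := ⟨_, rfl⟩
        obtain ⟨c, hc'⟩ : ∃ c, c = m' ^ 2 := ⟨_, rfl⟩
        rw [← hQ'] at hQ ⊢
        rw [← hc'] at hc16 ⊢
        obtain ⟨x, hx⟩ : ∃ x, x = (p - 1) / 2 := ⟨_, rfl⟩
        rw [← hx]
        have h1 : 144 * x ≤ 7 * Q := by omega
        have h2 := Nat.mul_le_mul_left c h1
        have h3 := Nat.mul_le_mul_right Q hc16
        nlinarith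
    obtain ⟨a, e, ha, he, hb', hd⟩ := easy p j (m' ^ 2) hp h5 hpc hc hb
    exact coll_finish _ _ _ a e hm h0 ha he hb' hd

lemma coll_main (m K : ℕ) (h1 : 3 ^ K < m) (h2 : m < 3 ^ (K + 1)) : Coll m (9 ^ K + 1) := by
  have hm0 : m ≠ 0 := by omega
  by_cases hbig : ∃ p, p.Prime ∧ 5 ≤ p ∧ p ∣ m
  · obtain ⟨p, hp, h5, hpm⟩ := hbig
    obtain ⟨j, m', hm', rfl⟩ := Nat.exists_eq_pow_mul_and_not_dvd hm0 p hp.ne_one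
    cases j with
    | zero => simp at hpm; exact absurd hpm hm'
    | succ j => exact big_prime p j m' K hp h5 hm' h2
  · obtain ⟨j, r, hr, rfl⟩ := Nat.exists_eq_pow_mul_and_not_dvd hm0 2 (by norm_num)
    have hr0 : r ≠ 0 := by rintro rfl; simp at hr
    obtain ⟨i, s, hs, rfl⟩ := Nat.exists_eq_pow_mul_and_not_dvd hr0 3 (by norm_num)
    have hs1 : s = 1 := by
      by_contra hne
      obtain ⟨p, hp, hps⟩ := Nat.exists_prime_and_dvd hne
      apply hbig
      refine ⟨p, hp, ?_, (hps.mul_left _).mul_left _⟩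
      have : p ≠ 2 := by rintro rfl; exact hr (hps.mul_left _)
      have : p ≠ 3 := by rintro rfl; exact hs hps
      have : p ≠ 4 := by rintro rfl; norm_num at hp
      have := hp.two_le
      omega
    subst hs1
    rw [mul_one] at *
    have h3 : 1 < 3 := by norm_num
    rcases (show j = 0 ∨ j = 1 ∨ j = 2 ∨ 3 ≤ j by omega) with rfl | rfl | rfl | hj
    · exfalso
      simp only [pow_zero, one_mul] at h1 h2
      have := (Nat.pow_lt_pow_iff_right h3).1 h1
      have := (Nat.pow_lt_pow_iff_right h3).1 h2
      omega
    · have e1 : K < i + 1 := (Nat.pow_lt_pow_iff_right h3).1 (by rw [pow_succ 3 i]; omega)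
      have e2 : i < K + 1 := (Nat.pow_lt_pow_iff_right h3).1 (by omega)
      obtain rfl : K = i := by omega
      rw [pow_one]; exact two_one K
    · have e1 : K < i + 2 := (Nat.pow_lt_pow_iff_right h3).1 (by rw [pow_succ 3 (i + 1), pow_succ 3 i]; omega)
      have e2 : i + 1 < K + 1 := (Nat.pow_lt_pow_iff_right h3).1 (by rw [pow_succ 3 i]; omega)
      obtain rfl : K = i + 1 := by omega
      exact two_two i
    · obtain ⟨l, rfl⟩ : ∃ l, j = l + 3 := ⟨j - 3, by omega⟩
      refine two_case l _ K (by omega) ?_ h2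
      cases i with
      | zero => left; simp
      | succ i =>
        right
        rw [pow_succ]
        have : 1 ≤ 3 ^ i := Nat.one_le_pow _ _ (by norm_num)
        omega

/-- For an integer `n ≥ 2`, `D(n)` is the smallest positive integer `m` such that the values
`a³ + a` for `1 ≤ a ≤ n` are pairwise distinct modulo `m²`.  If `k` is the least positive
integer `j` with `3^j ≥ √n`, then `D(n) = 3^k`. -/
theorem sun_conjecture (n : ℕ) (hn : 2 ≤ n) (k : ℕ)
    (hk : IsLeast {j : ℕ | 1 ≤ j ∧ Real.sqrt n ≤ 3 ^ j} k) :
    IsLeast {m : ℕ | 0 < m ∧ ∀ a b : ℕ, 1 ≤ a → a < b → b ≤ n →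
      ¬ (b ^ 3 + b ≡ a ^ 3 + a [MOD m ^ 2])} (3 ^ k) := by
  obtain ⟨⟨hk1, hk2⟩, hk3⟩ := hk
  have hsq : ∀ j : ℕ, Real.sqrt n ≤ 3 ^ j ↔ n ≤ 9 ^ j := by
    intro j
    rw [Real.sqrt_le_left (by positivity), ← pow_mul, mul_comm, pow_mul]
    norm_num
    exact_mod_cast Iff.rfl
  refine ⟨⟨by positivity, fun a b ha hab hb => ?_⟩, ?_⟩
  · exact three_inj k a b hab ha (hb.trans ((hsq k).1 hk2))
  · rintro m ⟨hm0, hm⟩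
    by_contra hlt
    push Not at hlt
    obtain ⟨K, rfl⟩ : ∃ K, k = K + 1 := ⟨k - 1, by omega⟩
    have hKn : 9 ^ K + 1 ≤ n := by
      rcases Nat.eq_zero_or_pos K with rfl | hK
      · simpa using hn
      · by_contra hcon
        have := hk3 (show K ∈ _ from ⟨hK, (hsq K).2 (by omega)⟩)
        omega
    have hcoll : Coll m (9 ^ K + 1) := by
      by_cases hmK : m ≤ 3 ^ K
      · refine coll_of _ _ 1 (m ^ 2) le_rfl (Nat.one_le_pow _ _ hm0) ?_ (Dvd.intro _ rfl)
        have : m ^ 2 ≤ (3 ^ K) ^ 2 := Nat.pow_le_pow_left hmK 2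
        rw [← pow_mul, mul_comm, pow_mul] at this
        norm_num at this
        omega
      · exact coll_main m K (by omega) hlt
    obtain ⟨a, b, ha, hab, hb, hc⟩ := hcoll
    exact hm a b ha hab (hb.trans hKn) hc
end

section
/- Let n ≥ 2·10^{12} and let k = min{ j ∈ ℤ⁺ : 3^j ≥ √n }. Suppose m = δ·p^r satisfies √n < m < 3^k, where δ ∈ {1,2,3}, p ≥ 5 is a prime with p ≡ 2 (mod 3), and r is a positive integer. Then N > 0, i.e. there exist integers 1 ≤ a, b ≤ X with δ⁴(a² + ab + b²) + 1 ≡ 0 (mod p^{2r}). -/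
open Finset

/-- Minus three is a non-square mod p when p ≡ 2 mod 3. -/
lemma neg_three_nonsq (p : ℕ) [Fact p.Prime] (hp5 : 5 ≤ p) (hp3 : p % 3 = 2) :
    ¬ IsSquare (-3 : ZMod p) := by
  rintro ⟨y, hy⟩
  have h2 : (2 : ZMod p) ≠ 0 := by
    intro h
    have : ((2 : ℕ) : ZMod p) = 0 := by exact_mod_cast h
    rw [ZMod.natCast_eq_zero_iff] at this
    have := Nat.le_of_dvd (by norm_num) this
    omega
  have h3 : (3 : ZMod p) ≠ 0 := by
    intro h
    have : ((3 : ℕ) : ZMod p) = 0 := by exact_mod_cast h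
    rw [ZMod.natCast_eq_zero_iff] at this
    have := Nat.le_of_dvd (by norm_num) this
    omega
  obtain ⟨z, hz⟩ : ∃ z : ZMod p, 2 * z = -1 + y := ⟨(-1 + y) / 2, by field_simp⟩
  have hz2 : z ^ 2 + z + 1 = 0 := by
    have : (2 * 2) * (z ^ 2 + z + 1) = 0 := by
      linear_combination (2 * z + y + 1) * hz - hy
    rcases mul_eq_zero.1 this with h | h
    · exact absurd h (mul_ne_zero h2 h2)
    · exact h
  have hz3 : z ^ 3 = 1 := by linear_combination (z - 1) * hz2
  have hz1 : z ≠ 1 := by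
    rintro rfl
    apply h3
    linear_combination hz2
  have hz0 : z ≠ 0 := by
    rintro rfl
    simp at hz2
  have hord : orderOf z = 3 := by
    exact orderOf_eq_prime hz3 hz1
  have hd : orderOf z ∣ p - 1 := orderOf_dvd_of_pow_eq_one (ZMod.pow_card_sub_one_eq_one hz0)
  rw [hord] at hd
  omega

lemma exists_nonsq (p : ℕ) [Fact p.Prime] (hp5 : 5 ≤ p) (hp3 : p % 3 = 2) :
    ∃ l : ZMod p, ¬ IsSquare (1 - l + l ^ 2) := by
  have hns := neg_three_nonsq p hp5 hp3
  have h3 : (3 : ZMod p) ≠ 0 := by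
    intro h
    apply hns
    rw [h]; simp
  by_contra! hall
  -- the sum of two quadratics has a root
  obtain ⟨a, b, hab⟩ := FiniteField.exists_root_sum_quadratic (R := ZMod p)
    (f := Polynomial.X ^ 2)
    (g := Polynomial.C 3 * Polynomial.X ^ 2 + Polynomial.C (-3) * Polynomial.X + Polynomial.C 3)
    (by simp) (Polynomial.degree_quadratic h3) (by
      rw [ZMod.card]
      have := (Fact.out : p.Prime).eq_two_or_odd
      omega)
  simp at hab
  have hab' : a ^ 2 = -3 * (1 - b + b ^ 2) := by linear_combination hab
  obtain ⟨y, hy⟩ := hall b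
  by_cases hy0 : y = 0
  · apply hns
    refine ⟨2 * b - 1, ?_⟩
    rw [hy0] at hy
    linear_combination -4 * hy
  · apply hns
    refine ⟨a / y, ?_⟩
    field_simp
    rw [hab', hy]; ring

lemma card_nonsq (p : ℕ) [Fact p.Prime] (hp5 : 5 ≤ p) (hp3 : p % 3 = 2) :
    p ≤ 2 * (univ.filter (fun l : ZMod p => ¬ IsSquare (1 - l + l ^ 2))).card + 1 := by
  classical
  have hns := neg_three_nonsq p hp5 hp3
  obtain ⟨c, hc⟩ := exists_nonsq p hp5 hp3
  have hne : ∀ l : ZMod p, 1 - l + l ^ 2 ≠ 0 := by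
    intro l hl
    apply hns
    exact ⟨2 * l - 1, by linear_combination -4 * hl⟩
  set S := univ.filter (fun l : ZMod p => ¬ IsSquare (1 - l + l ^ 2)) with hS
  have hcard : (Sᶜ.erase (c⁻¹)).card ≤ S.card := by
    apply Finset.card_le_card_of_injOn (fun l => (c + l - l * c) / (1 - l * c))
    · intro l hl
      simp only [hS, coe_erase, coe_compl, coe_filter, mem_univ, true_and, Set.mem_sdiff,
        Set.mem_compl_iff, Set.mem_ofPred_eq, not_not, Set.mem_singleton_iff] at hl ⊢
      obtain ⟨⟨y, hy⟩, hl⟩ := hl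
      have hd : 1 - l * c ≠ 0 := fun h => hl (eq_inv_of_mul_eq_one_left (by linear_combination -h))
      rintro ⟨x, hx⟩
      have hy0 : y ≠ 0 := by
        rintro rfl
        exact hne l (by simpa using hy)
      apply hc
      refine ⟨x * (1 - l * c) / y, ?_⟩
      have e1 : (1 - c + c ^ 2) * (1 - l + l ^ 2) =
        (1 - (c + l - l * c) / (1 - l * c) + ((c + l - l * c) / (1 - l * c)) ^ 2)
          * (1 - l * c) ^ 2 := by
        have hμ := div_mul_cancel₀ (c + l - l * c) hd
        linear_combination ((1 - l * c) - (c + l - l * c) / (1 - l * c) * (1 - l * c)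
          - (c + l - l * c)) * hμ
      rw [hx, hy] at e1
      field_simp
      linear_combination e1
    · intro l hl l' hl' h
      simp only [hS, coe_erase, coe_compl, coe_filter, mem_univ, true_and, Set.mem_sdiff,
        Set.mem_compl_iff, Set.mem_ofPred_eq, not_not, Set.mem_singleton_iff] at hl hl' h
      have hd : 1 - l * c ≠ 0 :=
        fun h => hl.2 (eq_inv_of_mul_eq_one_left (by linear_combination -h))
      have hd' : 1 - l' * c ≠ 0 :=
        fun h => hl'.2 (eq_inv_of_mul_eq_one_left (by linear_combination -h))
      rw [div_eq_div_iff hd hd'] at h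
      have : (1 - c + c ^ 2) * (l - l') = 0 := by linear_combination h
      rcases mul_eq_zero.1 this with h | h
      · exact absurd h (hne c)
      · exact sub_eq_zero.1 h
  have h1 := Finset.pred_card_le_card_erase (s := Sᶜ) (a := c⁻¹)
  have h2 := Finset.card_add_card_compl S
  rw [ZMod.card] at h2
  omega

/-- Covering lemma, positive case. -/
lemma cover_pos (q L d e : ℤ) (hq : 0 < q) (hd : 1 ≤ d) (he : 1 ≤ e) (hco : IsCoprime d e)
    (heL : e ≤ L) (hqL : q ≤ e * (L - d)) (t : ℤ) :
    ∃ a b : ℤ, 0 ≤ a ∧ a < L ∧ 0 ≤ b ∧ b < L ∧ q ∣ d * a + e * b - t := by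
  -- representative of t in [e*d, e*d+q)
  obtain ⟨T, hT1, hT2, k, hk⟩ : ∃ T, e * d ≤ T ∧ T < e * d + q ∧ q ∣ T - t := by
    refine ⟨e * d + (t - e * d) % q, by linarith [Int.emod_nonneg (t - e * d) hq.ne'],
      by linarith [Int.emod_lt_of_pos (t - e * d) hq], ?_⟩
    have := Int.mul_ediv_add_emod (t - e * d) q
    exact ⟨-((t - e * d) / q), by linarith⟩
  obtain ⟨x, y, hxy⟩ := hco
  -- solution: a ≡ T x mod e
  have hT : d * (x * T) + e * (y * T) = T := by linear_combination T * hxy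
  have hm := Int.mul_ediv_add_emod (x * T) e
  have h0 := Int.emod_nonneg (x * T) (show e ≠ 0 by omega)
  have h1 := Int.emod_lt_of_pos (x * T) (show 0 < e by omega)
  set a := (x * T) % e
  set s := (x * T) / e
  have hab : d * a + e * (y * T + d * s) = T := by linear_combination hT + d * hm
  set b := y * T + d * s
  refine ⟨a, b, h0, by omega, ?_, ?_, k, by linear_combination hab + hk⟩
  · nlinarith
  · nlinarith

lemma cover_s18 (q L d e : ℤ) (hq : 0 < q) (hd : 1 ≤ d) (he : e ≠ 0) (hco : IsCoprime d e)
    (heL : |e| ≤ L) (hqL : q ≤ |e| * (L - d)) (t : ℤ) :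
    ∃ a b : ℤ, 0 ≤ a ∧ a < L ∧ 0 ≤ b ∧ b < L ∧ q ∣ d * a + e * b - t := by
  rcases lt_or_gt_of_ne he with h | h
  · rw [abs_of_neg h] at heL hqL
    obtain ⟨a, b, h1, h2, h3, h4, h5⟩ := cover_pos q L d (-e) hq hd (by omega)
      hco.neg_right heL hqL (t - e * (L - 1))
    refine ⟨a, L - 1 - b, h1, h2, by omega, by omega, ?_⟩
    convert h5 using 1
    ring
  · rw [abs_of_pos h] at heL hqL
    exact cover_pos q L d e hq hd (by omega) hco heL hqL t

lemma sq_lift (p : ℕ) (hp : p.Prime) (hp5 : 5 ≤ p) (c y : ℤ) (hy : ¬ (p : ℤ) ∣ y)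
    (h : (p : ℤ) ∣ y ^ 2 - c) (r : ℕ) :
    ∃ z : ℤ, ¬ (p : ℤ) ∣ z ∧ (p : ℤ) ^ (r + 1) ∣ z ^ 2 - c := by
  have hpi : Prime (p : ℤ) := Nat.prime_iff_prime_int.1 hp
  induction r with
  | zero => exact ⟨y, hy, by simpa using h⟩
  | succ r ih =>
    obtain ⟨z, hz, k, hk⟩ := ih
    have h2 : ¬ (p : ℤ) ∣ 2 * z := by
      intro h
      rcases hpi.dvd_or_dvd h with h | h
      · have := Int.le_of_dvd (by norm_num) h
        omega
      · exact hz h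
    obtain ⟨u, v, huv⟩ := (hpi.coprime_iff_not_dvd.2 h2)
    refine ⟨z - k * v * p ^ (r + 1), ?_, ?_⟩
    · intro h
      apply hz
      rw [show z = (z - k * v * (p : ℤ) ^ (r + 1)) + k * v * (p : ℤ) ^ r * p by ring]
      exact dvd_add h (dvd_mul_left _ _)
    · refine ⟨k * u + k ^ 2 * v ^ 2 * p ^ r, ?_⟩
      linear_combination hk - k * (p : ℤ) ^ (r + 1) * huv

lemma core_s18 (p r : ℕ) (hr : 1 ≤ r) [Fact p.Prime] (hp5 : 5 ≤ p) (hp3 : p % 3 = 2)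
    (δ L d e : ℤ) (hδ1 : 1 ≤ δ) (hδ3 : δ ≤ 3) (hd : 1 ≤ d) (he : e ≠ 0) (hco : IsCoprime d e)
    (heL : |e| ≤ L) (hqL : (p : ℤ) ^ r ≤ |e| * (L - d))
    (hns : ¬ IsSquare ((d : ZMod p) ^ 2 - d * e + e ^ 2)) :
    ∃ a b : ℤ, 1 ≤ a ∧ a ≤ L * p ^ r ∧ 1 ≤ b ∧ b ≤ L * p ^ r ∧
      (p : ℤ) ^ (2 * r) ∣ δ ^ 4 * (a ^ 2 + a * b + b ^ 2) + 1 := by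
  have hp : p.Prime := Fact.out
  have hpi : Prime (p : ℤ) := Nat.prime_iff_prime_int.1 hp
  have h3ns := neg_three_nonsq p hp5 hp3
  have hp3' : ¬ (p : ℤ) ∣ 3 := by
    intro h
    have := Int.le_of_dvd (by norm_num) h
    omega
  have hpδ : ¬ (p : ℤ) ∣ δ := by
    intro h
    have := Int.le_of_dvd (by omega) h
    omega
  have hF : ringChar (ZMod p) ≠ 2 := by
    rw [ZMod.ringChar_zmod_n]; omega
  -- square root mod p
  obtain ⟨y, hy⟩ : IsSquare ((-3 : ZMod p) * ((d : ZMod p) ^ 2 - d * e + e ^ 2)) := by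
    have ha : (-3 : ZMod p) ≠ 0 := fun h => h3ns (by rw [h]; simp)
    have hb : ((d : ZMod p) ^ 2 - d * e + e ^ 2) ≠ 0 := fun h => hns (by rw [h]; simp)
    rw [← quadraticChar_one_iff_isSquare (mul_ne_zero ha hb), map_mul,
      quadraticChar_neg_one_iff_not_isSquare.2 h3ns, quadraticChar_neg_one_iff_not_isSquare.2 hns]
    norm_num
  obtain ⟨y, rfl⟩ := ZMod.intCast_surjective y
  have hy0 : ¬ (p : ℤ) ∣ y := by
    intro h
    rw [← ZMod.intCast_zmod_eq_zero_iff_dvd] at h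
    rw [h] at hy
    simp only [mul_zero, mul_eq_zero] at hy
    rcases hy with h | h
    · exact h3ns (by rw [h]; simp)
    · exact hns (by rw [h]; simp)
  have hyd : (p : ℤ) ∣ y ^ 2 - (-3 * (d ^ 2 - d * e + e ^ 2)) := by
    rw [← ZMod.intCast_zmod_eq_zero_iff_dvd]
    push_cast
    rw [hy]; ring
  obtain ⟨z, hz, k, hk⟩ := sq_lift p hp hp5 _ y hy0 hyd (r - 1)
  rw [Nat.sub_add_cancel hr] at hk
  rw [show (2 * r) = r + r by ring, pow_add]
  have hcopr : ∀ x : ℤ, ¬ (p : ℤ) ∣ x → IsCoprime ((p : ℤ) ^ r) x := fun x hx =>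
    (hpi.coprime_iff_not_dvd.2 hx).pow_left
  have hq : 0 < (p : ℤ) ^ r := by positivity
  generalize (p : ℤ) ^ r = q at *
  have hnd : ¬ (p : ℤ) ∣ δ ^ 2 * z := by
    intro h
    rcases hpi.dvd_or_dvd h with h | h
    · exact hpδ (hpi.dvd_of_dvd_pow h)
    · exact hz h
  obtain ⟨u, s, hs⟩ := hcopr _ hnd
  have hf0 : q ∣ δ ^ 4 * (3 * (d ^ 2 - d * e + e ^ 2) * s ^ 2) + 1 := by
    refine ⟨δ ^ 4 * s ^ 2 * k + (1 + s * (δ ^ 2 * z)) * u, ?_⟩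
    linear_combination δ ^ 4 * s ^ 2 * hk - (1 + s * (δ ^ 2 * z)) * hs
  obtain ⟨K, hK⟩ := hf0
  have hcs : IsCoprime q (δ ^ 4 * 3 * s) := by
    have h1 : IsCoprime q (δ ^ 4) := (hcopr _ hpδ).pow_right
    have h3 : IsCoprime q s := ⟨u, δ ^ 2 * z, by linear_combination hs⟩
    exact (h1.mul_right (hcopr _ hp3')).mul_right h3
  obtain ⟨u', v', hv'⟩ := hcs
  have norm : ∀ A : ℤ, ∃ a0 i, 1 ≤ a0 ∧ a0 ≤ q ∧ A = a0 + q * i := by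
    intro A
    refine ⟨(A - 1) % q + 1, (A - 1) / q, ?_, ?_, ?_⟩
    · linarith [Int.emod_nonneg (A - 1) hq.ne']
    · linarith [Int.emod_lt_of_pos (A - 1) hq]
    · linarith [Int.mul_ediv_add_emod (A - 1) q]
  obtain ⟨a0, i, ha1, ha2, hA⟩ := norm (s * (2 * d - e))
  obtain ⟨b0, j, hb1, hb2, hB⟩ := norm (s * (2 * e - d))
  obtain ⟨a1, b1, g1, g2, g3, g4, w, hw⟩ := cover_s18 q L d e hq hd he hco heL hqL
    (-K * v' + d * i + e * j)
  refine ⟨a0 + q * a1, b0 + q * b1, by nlinarith, by nlinarith, by nlinarith, by nlinarith, ?_⟩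
  have ea : a0 + q * a1 = s * (2 * d - e) + q * (a1 - i) := by linear_combination -hA
  have eb : b0 + q * b1 = s * (2 * e - d) + q * (b1 - j) := by linear_combination -hB
  rw [ea, eb]
  refine ⟨K * u' + δ ^ 4 * 3 * s * w +
    δ ^ 4 * ((a1 - i) ^ 2 + (a1 - i) * (b1 - j) + (b1 - j) ^ 2), ?_⟩
  linear_combination hK + q * (δ ^ 4 * 3 * s) * hw - q * K * hv'

lemma dirichlet (p : ℕ) [Fact p.Prime] (hp : 100 ≤ p) (l : ZMod p) :
    ∃ de : ℤ × ℤ, 1 ≤ de.1 ∧ de.1 ≤ 9 ∧ 10 * |de.2| ≤ p ∧ IsCoprime de.1 de.2 ∧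
      (de.1 : ZMod p) * l = de.2 := by
  obtain ⟨j, k, hk0, hk9, h⟩ := Real.exists_int_int_abs_mul_sub_le ((l.val : ℝ) / p)
    (n := 9) (by norm_num)
  have hp0 : (0 : ℝ) < p := by positivity
  set e : ℤ := k * l.val - j * p with he
  have hbound : 10 * |e| ≤ p := by
    have h1 : (e : ℝ) = (k * ((l.val : ℝ) / p) - j) * p := by
      rw [he]; push_cast; field_simp
    have h2 : (10 : ℝ) * |(e : ℝ)| ≤ p := by
      rw [h1, abs_mul, abs_of_pos hp0]
      push_cast at h
      nlinarith
    exact_mod_cast h2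
  have hcong : (k : ZMod p) * l = e := by
    rw [he]; push_cast
    simp
  have hg : 0 < Int.gcd k e := Int.gcd_pos_of_ne_zero_left _ (by omega)
  obtain ⟨d', e', hco, hd', he'⟩ := Int.exists_gcd_one hg
  set g : ℕ := Int.gcd k e
  have hd1 : 1 ≤ d' := by
    by_contra hcon
    have : d' * g ≤ 0 := mul_nonpos_of_nonpos_of_nonneg (by omega) (by omega)
    omega
  have hgi : (1 : ℤ) ≤ g := by omega
  push_cast at hk9
  have hg9 : (g : ℤ) ≤ 9 := by nlinarith
  have hd9 : d' ≤ 9 := by nlinarith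
  refine ⟨(d', e'), hd1, hd9, ?_, Int.isCoprime_iff_gcd_eq_one.2 hco, ?_⟩
  · have : |e'| ≤ |e| := by
      rw [he', abs_mul]
      have : (1 : ℤ) ≤ |(g : ℤ)| := by rw [abs_of_nonneg] <;> omega
      nlinarith [abs_nonneg e']
    simp only
    omega
  · have hgz : (g : ZMod p) ≠ 0 := by
      intro h0
      rw [ZMod.natCast_eq_zero_iff] at h0
      have := Nat.le_of_dvd hg h0
      omega
    rw [hd', he'] at hcong
    push_cast at hcong
    apply mul_right_cancel₀ hgz
    simp only
    linear_combination hcong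

lemma exists_big (p : ℕ) [Fact p.Prime] (hp : 1000 ≤ p) (hp3 : p % 3 = 2) :
    ∃ d e : ℤ, 1 ≤ d ∧ d ≤ 9 ∧ 10 * |e| ≤ p ∧ 18 ≤ |e| ∧ IsCoprime d e ∧
      ¬ IsSquare ((d : ZMod p) ^ 2 - d * e + e ^ 2) := by
  classical
  choose f h1 h2 h3 h4 h5 using dirichlet p (by omega)
  have hne : ∀ l, ((f l).1 : ZMod p) ≠ 0 := by
    intro l h0
    rw [ZMod.intCast_zmod_eq_zero_iff_dvd] at h0
    have := Int.le_of_dvd (by linarith [h1 l]) h0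
    have := h2 l
    omega
  have hc := card_nonsq p (by omega) hp3
  set S := univ.filter (fun l : ZMod p => ¬ IsSquare (1 - l + l ^ 2)) with hS
  have : ∃ l ∈ S, 18 ≤ |(f l).2| := by
    by_contra! hcon
    have : S.card ≤ (Finset.Icc (1 : ℤ) 9 ×ˢ Finset.Icc (-17 : ℤ) 17).card := by
      apply Finset.card_le_card_of_injOn f
      · intro l hl
        have := hcon l hl
        have h1 := h1 l
        have h2 := h2 l
        rw [abs_lt] at this
        simp only [coe_product, coe_Icc, Set.mem_prod, Set.mem_Icc]
        omega
      · intro l _ l' _ h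
        apply mul_left_cancel₀ (hne l)
        rw [h5 l, h, h5 l']
    simp at this
    omega
  obtain ⟨l, hl, hbig⟩ := this
  refine ⟨(f l).1, (f l).2, h1 l, h2 l, h3 l, hbig, h4 l, ?_⟩
  rintro ⟨x, hx⟩
  rw [← h5 l] at hx
  have hl : ¬ IsSquare (1 - l + l ^ 2) := by simpa [hS] using hl
  apply hl
  have := hne l
  refine ⟨x / (f l).1, ?_⟩
  field_simp
  linear_combination hx

lemma main_exists (p r : ℕ) (hr : 1 ≤ r) [Fact p.Prime] (hp5 : 5 ≤ p) (hp3 : p % 3 = 2)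
    (hq : 400000 ≤ p ^ r) (δ L : ℤ) (hδ1 : 1 ≤ δ) (hδ3 : δ ≤ 3)
    (hL : (p : ℤ) ^ r ≤ 17 * L) (hL1 : r = 1 → L = (p : ℤ) / 9) :
    ∃ a b : ℤ, 1 ≤ a ∧ a ≤ L * p ^ r ∧ 1 ≤ b ∧ b ≤ L * p ^ r ∧
      (p : ℤ) ^ (2 * r) ∣ δ ^ 4 * (a ^ 2 + a * b + b ^ 2) + 1 := by
  have hq' : (400000 : ℤ) ≤ (p : ℤ) ^ r := by exact_mod_cast hq
  rcases Nat.lt_or_ge r 2 with h | h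
  · obtain rfl : r = 1 := by omega
    have hL1 := hL1 rfl
    rw [pow_one] at hq'
    obtain ⟨d, e, h1, h2, h3, h4, h5, h6⟩ := exists_big p (by omega) hp3
    refine core_s18 p 1 le_rfl hp5 hp3 δ L d e hδ1 hδ3 h1 ?_ h5 (by omega) ?_ h6
    · rintro rfl
      simp at h4
    · have : 18 * (L - d) ≤ |e| * (L - d) := by
        apply mul_le_mul_of_nonneg_right h4; omega
      rw [pow_one]
      omega
  · obtain ⟨l, hl⟩ := exists_nonsq p hp5 hp3
    have hp2 : (p : ℤ) ^ 2 ≤ (p : ℤ) ^ r := pow_le_pow_right₀ (by omega) h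
    have hLp : (p : ℤ) + 18 ≤ L := by
      rcases Nat.lt_or_ge p 40 with hp | hp
      · omega
      · have : (40 : ℤ) ≤ p := by omega
        nlinarith
    set e : ℤ := 18 + ((l - 18 : ZMod p).val : ℤ) with he
    have hv : (l - 18 : ZMod p).val < p := ZMod.val_lt _
    have habs : |e| = e := abs_of_nonneg (by omega)
    refine core_s18 p r hr hp5 hp3 δ L 1 e hδ1 hδ3 le_rfl (by omega) isCoprime_one_left
      (by omega) ?_ ?_
    · rw [habs]
      have : 18 * (L - 1) ≤ e * (L - 1) := by
        apply mul_le_mul_of_nonneg_right <;> omega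
      omega
    · have : (e : ZMod p) = l := by rw [he]; push_cast; simp
      rw [this]
      simpa using hl

theorem N_pos (n : ℕ) (hn : 2 * 10 ^ 12 ≤ n) (k : ℕ)
    (hk : IsLeast {j : ℕ | 1 ≤ j ∧ Real.sqrt n ≤ 3 ^ j} k)
    (m δ r p : ℕ) (hp : p.Prime) (hp5 : 5 ≤ p) (hp3 : p % 3 = 2)
    (hδ1 : 1 ≤ δ) (hδ3 : δ ≤ 3) (hr : 1 ≤ r) (hm : m = δ * p ^ r)
    (hm1 : Real.sqrt n < m) (hm2 : m < 3 ^ k)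
    (X : ℕ)
    (hX : X = if p = 5 then p ^ 2 / 9 * p ^ (2 * r - 2) else p / 9 * p ^ (2 * r - 1))
    (N : ℕ)
    (hN : N = ((Finset.Icc 1 X ×ˢ Finset.Icc 1 X).filter
      (fun ab => (δ ^ 4 * (ab.1 ^ 2 + ab.1 * ab.2 + ab.2 ^ 2) + 1) % p ^ (2 * r) = 0)).card) :
    0 < N ∧ ∃ a b : ℕ, 1 ≤ a ∧ a ≤ X ∧ 1 ≤ b ∧ b ≤ X ∧
      (δ ^ 4 * (a ^ 2 + a * b + b ^ 2) + 1) % p ^ (2 * r) = 0 := by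
  have key : ∃ a b : ℕ, 1 ≤ a ∧ a ≤ X ∧ 1 ≤ b ∧ b ≤ X ∧
      (δ ^ 4 * (a ^ 2 + a * b + b ^ 2) + 1) % p ^ (2 * r) = 0 := by
    have : Fact p.Prime := ⟨hp⟩
    have hq : 400000 ≤ p ^ r := by
      have h1 : n < m ^ 2 := by
        have := (Real.sqrt_lt' (by
          exact lt_of_le_of_lt (Real.sqrt_nonneg _) hm1)).1 hm1
        exact_mod_cast this
      by_contra! hlt
      have : m ≤ 3 * 400000 := by
        rw [hm]; exact Nat.mul_le_mul hδ3 hlt.le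
      have : m ^ 2 ≤ (3 * 400000) ^ 2 := Nat.pow_le_pow_left this 2
      omega
    obtain ⟨L, hXL, hL, hL1⟩ : ∃ L : ℕ, X = L * p ^ r ∧ p ^ r ≤ 17 * L ∧ (r = 1 → L = p / 9) := by
      by_cases h5 : p = 5
      · subst h5
        have hr2 : 2 ≤ r := by
          by_contra hcon
          obtain rfl : r = 1 := by omega
          norm_num at hq
        obtain ⟨s, rfl⟩ := Nat.exists_eq_add_of_le hr2
        refine ⟨2 * 5 ^ s, ?_, ?_, by omega⟩
        · rw [hX, if_pos rfl, show 2 * (2 + s) - 2 = s + (2 + s) by omega, pow_add 5 s, mul_assoc]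
          norm_num
        · rw [pow_add]; omega
      · have hp11 : 11 ≤ p := by
          by_contra hcon
          have : p = 8 := by omega
          subst this
          norm_num at hp
        obtain ⟨s, rfl⟩ := Nat.exists_eq_add_of_le hr
        refine ⟨p / 9 * p ^ s, ?_, ?_, ?_⟩
        · rw [hX, if_neg h5, show 2 * (1 + s) - 1 = s + (1 + s) by omega, pow_add, mul_assoc]
        · rw [pow_add, pow_one, ← mul_assoc]
          exact Nat.mul_le_mul_right _ (by omega)
        · intro h
          obtain rfl : s = 0 := by omega
          simp
    obtain ⟨a, b, h1, h2, h3, h4, h5⟩ := main_exists p r hr hp5 hp3 hq δ L (by omega) (by omega)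
      (by exact_mod_cast hL) (by intro h; rw [hL1 h]; simp)
    lift a to ℕ using by omega
    lift b to ℕ using by omega
    refine ⟨a, b, by omega, ?_, by omega, ?_, ?_⟩
    · rw [hXL]; exact_mod_cast h2
    · rw [hXL]; exact_mod_cast h4
    · apply Nat.mod_eq_zero_of_dvd
      exact_mod_cast h5
  refine ⟨?_, key⟩
  obtain ⟨a, b, h1, h2, h3, h4, h5⟩ := key
  rw [hN]
  apply Finset.card_pos.2
  exact ⟨(a, b), by simp [h1, h2, h3, h4, h5]⟩
end

section
/- Let n ≥ 2·10^{12} and let k = min{ j ∈ ℤ⁺ : 3^j ≥ √n }. Suppose m satisfies √n < m < 3^k and m = δ·p^r, where 1 ≤ δ ≤ 3, p ≥ 5 is a prime, and r is a positive integer. Then there exist integers 1 ≤ a < b ≤ n such that b³ + b ≡ a³ + a (mod m²). -/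
theorem aux_cover (q K u v : ℤ) (hq : 0 < q) (hu : 0 < u) (hco : IsCoprime u v) (huK : u ≤ K)
    (hlen : q + |v| * u ≤ u * (K - 1)) (c : ℤ) :
    ∃ s t : ℤ, 0 ≤ s ∧ s < K ∧ 0 ≤ t ∧ t < K ∧ q ∣ u * s + v * t - c := by
  set L : ℤ := max 0 (v * u) with hL
  set c' : ℤ := L + (c - L) % q with hc'
  have h1 : 0 ≤ (c - L) % q := Int.emod_nonneg _ hq.ne'
  have h2 : (c - L) % q < q := Int.emod_lt_of_pos _ hq
  have h3 : q ∣ c' - c := by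
    have := Int.emod_add_mul_ediv (c - L) q
    exact ⟨-((c - L) / q), by rw [hc']; linarith⟩
  obtain ⟨e, f, hef⟩ := hco
  set t : ℤ := (f * c') % u with ht
  have t0 : 0 ≤ t := Int.emod_nonneg _ hu.ne'
  have t1 : t < u := Int.emod_lt_of_pos _ hu
  have h4 : u ∣ c' - v * t := by
    have := Int.emod_add_mul_ediv (f * c') u
    refine ⟨e * c' + v * ((f * c') / u), ?_⟩
    have h5 : t = f * c' - u * (f * c' / u) := by rw [ht]; linarith
    rw [h5]; linear_combination (-c') * hef
  obtain ⟨s, hs⟩ := h4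
  have hb : 0 ≤ c' - v * t ∧ c' - v * t < q + |v| * u := by
    rcases le_total 0 v with hv | hv
    · have : L = v * u := max_eq_right (by positivity)
      rw [abs_of_nonneg hv]
      constructor <;> nlinarith
    · have : L = 0 := max_eq_left (by nlinarith)
      rw [abs_of_nonpos hv]
      constructor <;> nlinarith
  refine ⟨s, t, ?_, ?_, t0, by linarith, ?_⟩
  · by_contra h
    push Not at h
    nlinarith [hb.1]
  · by_contra h
    push Not at h
    nlinarith [hb.2]
  · have : u * s + v * t - c = c' - c := by linarith
    rw [this]; exact h3

theorem aux_core (q K D u v w : ℤ) (hq : 0 < q) (hu : 0 < u) (hco : IsCoprime u v) (huK : u ≤ K)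
    (hlen : q + |v| * u ≤ u * (K - 1)) (hw : q ∣ w ^ 2 + 3 * (u ^ 2 - u * v + v ^ 2))
    (hwq : IsCoprime w q) (hD : IsCoprime D q) (h3 : IsCoprime 3 q) (huv : ¬ q ∣ u - v) :
    ∃ x y : ℤ, 1 ≤ x ∧ x ≤ q * K ∧ 1 ≤ y ∧ y ≤ q * K ∧ x ≠ y ∧
      q ^ 2 ∣ D ^ 2 * (x ^ 2 + x * y + y ^ 2) + 1 := by
  obtain ⟨g, e, hg⟩ := hwq.mul_left hD
  -- g * (w * D) + e * q = 1
  obtain ⟨z, hz⟩ := hw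
  -- residues in [1,q]
  have res : ∀ a : ℤ, ∃ b i : ℤ, 1 ≤ b ∧ b ≤ q ∧ b = a + q * i := by
    intro a
    refine ⟨1 + (a - 1) % q, -((a - 1) / q), ?_, ?_, ?_⟩
    · linarith [Int.emod_nonneg (a - 1) hq.ne']
    · linarith [Int.emod_lt_of_pos (a - 1) hq]
    · linarith [Int.emod_add_mul_ediv (a - 1) q]
  obtain ⟨x0, i, hx1, hx2, hx⟩ := res (g * (2 * u - v))
  obtain ⟨y0, j, hy1, hy2, hy⟩ := res (g * (2 * v - u))
  have hc : q ∣ D ^ 2 * (x0 ^ 2 + x0 * y0 + y0 ^ 2) + 1 := by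
    have e1 : (q : ℤ) ∣ D ^ 2 * ((g * (2 * u - v)) ^ 2 + (g * (2 * u - v)) * (g * (2 * v - u)) +
        (g * (2 * v - u)) ^ 2) + 1 := by
      refine ⟨D ^ 2 * g ^ 2 * z + e * (1 + g * (w * D)), ?_⟩
      have : g * (w * D) = 1 - e * q := by linarith
      linear_combination (D ^ 2 * g ^ 2) * hz - (1 + g * (w * D)) * hg
    rw [← Int.modEq_zero_iff_dvd] at e1 ⊢
    have ex : x0 ≡ g * (2 * u - v) [ZMOD q] := by
      rw [hx]; exact (Int.modEq_iff_dvd.2 ⟨-i, by ring⟩)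
    have ey : y0 ≡ g * (2 * v - u) [ZMOD q] := by
      rw [hy]; exact (Int.modEq_iff_dvd.2 ⟨-j, by ring⟩)
    refine Int.ModEq.trans ?_ e1
    gcongr
  obtain ⟨c, hc⟩ := hc
  -- need c + D^2 * 3 g (u s + v t) ≡ 0
  have hgq : IsCoprime g q := ⟨w * D, e, by linarith⟩
  have hE : IsCoprime (D ^ 2 * 3 * g) q := ((hD.pow_left).mul_left h3).mul_left hgq
  obtain ⟨E, F, hEF⟩ := hE
  obtain ⟨s, t, s0, s1, t0, t1, k, hk⟩ := aux_cover q K u v hq hu hco huK hlen (-(E * c))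
  refine ⟨x0 + q * s, y0 + q * t, by nlinarith, by nlinarith, by nlinarith, by nlinarith, ?_, ?_⟩
  · intro h
    apply huv
    have h5 : q ∣ (3 * g) * (u - v) :=
      ⟨t - s - i + j, by linear_combination h - hx + hy⟩
    exact ((h3.mul_left hgq).symm).dvd_of_dvd_mul_left h5
  · have h6 : q ∣ c + D ^ 2 * (s * (2 * x0 + y0) + t * (2 * y0 + x0)) := by
      refine ⟨c * F + D ^ 2 * 3 * g * k + D ^ 2 * (s * (2 * i + j) + t * (2 * j + i)), ?_⟩
      rw [hx, hy]
      linear_combination (D ^ 2 * 3 * g) * hk - c * hEF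
    obtain ⟨l, hl⟩ := h6
    refine ⟨l + D ^ 2 * (s ^ 2 + s * t + t ^ 2), ?_⟩
    linear_combination hc + q * hl

theorem aux_hensel (p : ℕ) (hp : p.Prime) (hp5 : 5 ≤ p) (A w : ℤ) (hw : ¬ (p : ℤ) ∣ w)
    (h : (p : ℤ) ∣ w ^ 2 + A) (r : ℕ) :
    ∃ w' : ℤ, ¬ (p : ℤ) ∣ w' ∧ (p : ℤ) ^ (r + 1) ∣ w' ^ 2 + A := by
  have hpp : Prime (p : ℤ) := Nat.prime_iff_prime_int.1 hp
  induction r with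
  | zero => exact ⟨w, hw, by simpa using h⟩
  | succ r ih =>
    obtain ⟨w', h1, c, hc⟩ := ih
    have h2 : ¬ (p : ℤ) ∣ 2 * w' := by
      intro h3
      rcases hpp.dvd_or_dvd h3 with h4 | h4
      · have := Int.le_of_dvd (by norm_num) h4
        omega
      · exact h1 h4
    obtain ⟨e, f, hef⟩ := (hpp.coprime_iff_not_dvd.2 h2)
    refine ⟨w' + p ^ (r + 1) * (-(f * c)), ?_, ?_⟩
    · intro h3
      apply h1
      have : (p : ℤ) ∣ p ^ (r + 1) * (-(f * c)) := Dvd.dvd.mul_right (dvd_pow_self _ (by omega)) _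
      exact (dvd_add_left this).1 h3
    · refine ⟨e * c + p ^ r * (f * c) ^ 2, ?_⟩
      linear_combination hc - (p : ℤ) ^ (r + 1) * c * hef

theorem aux_rho (p : ℕ) (hp : p.Prime) (hp5 : 5 ≤ p) :
    ∃ ρ w : ℤ, ¬ (p : ℤ) ∣ w ∧ ¬ (p : ℤ) ∣ ρ - 1 ∧ (p : ℤ) ∣ w ^ 2 + 3 * (ρ ^ 2 - ρ + 1) := by
  have := Fact.mk hp
  have small : ∀ a : ℕ, 0 < a → a < 5 → ((a : ℕ) : ZMod p) ≠ 0 := by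
    intro a h0 h1 h
    rw [ZMod.natCast_eq_zero_iff] at h
    have := Nat.le_of_dvd h0 h
    omega
  have n2 : (2 : ZMod p) ≠ 0 := by simpa using small 2 (by norm_num) (by norm_num)
  have n3 : (3 : ZMod p) ≠ 0 := by simpa using small 3 (by norm_num) (by norm_num)
  suffices H : ∃ ρ w : ZMod p, w ≠ 0 ∧ ρ ≠ 1 ∧ w ^ 2 + 3 * (ρ ^ 2 - ρ + 1) = 0 by
    obtain ⟨ρ, w, h1, h2, h3⟩ := H
    obtain ⟨ρ, rfl⟩ := ZMod.intCast_surjective ρ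
    obtain ⟨w, rfl⟩ := ZMod.intCast_surjective w
    refine ⟨ρ, w, ?_, ?_, ?_⟩
    · rwa [← ZMod.intCast_zmod_eq_zero_iff_dvd]
    · rw [← ZMod.intCast_zmod_eq_zero_iff_dvd]; push_cast; rwa [sub_eq_zero]
    · rw [← ZMod.intCast_zmod_eq_zero_iff_dvd]; push_cast; exact h3
  have key : (∃ b : ZMod p, b ^ 2 = -3) → ∃ ρ w : ZMod p, w ≠ 0 ∧ ρ ≠ 1 ∧ w ^ 2 + 3 * (ρ ^ 2 - ρ + 1) = 0 := by
    rintro ⟨b, hb⟩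
    refine ⟨0, b, ?_, zero_ne_one, by rw [hb]; ring⟩
    rintro rfl
    apply n3
    linear_combination hb
  obtain ⟨a, b, hab⟩ : ∃ a b : ZMod p, a ^ 2 + 3 * b ^ 2 + 9 = 0 := by
    have := FiniteField.exists_root_sum_quadratic (R := ZMod p) (f := Polynomial.X ^ 2)
      (g := Polynomial.C 3 * Polynomial.X ^ 2 + Polynomial.C 0 * Polynomial.X + Polynomial.C 9) (by simp) (Polynomial.degree_quadratic n3)
      (by rw [ZMod.card]; exact hp.odd_of_ne_two (by omega) |> Nat.odd_iff.1)
    obtain ⟨a, b, h⟩ := this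
    refine ⟨a, b, ?_⟩
    simp at h
    linear_combination h
  by_cases ha : a = 0
  · subst ha
    apply key
    refine ⟨b, mul_left_cancel₀ n3 ?_⟩
    linear_combination hab
  · by_cases hρ : (b + 1) / 2 = 1
    · apply key
      have hb : b = 1 := by field_simp at hρ; linear_combination hρ
      refine ⟨a / 2, ?_⟩
      field_simp
      rw [hb] at hab
      linear_combination hab
    · refine ⟨(b + 1) / 2, a / 2, div_ne_zero ha n2, hρ, ?_⟩
      field_simp
      linear_combination hab

theorem aux_coprime (u v x y a b c d : ℤ) (hco : IsCoprime u v) (h7 : ¬ (7 : ℤ) ∣ x)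
    (h1 : 7 ^ 4 * u = a * x + b * y) (h2 : 7 ^ 4 * v = c * x + d * y) : IsCoprime x y := by
  refine isCoprime_of_prime_dvd ?_ ?_
  · rintro ⟨rfl, -⟩
    exact h7 (dvd_zero _)
  · intro z hz hx hy
    have hu : z ∣ 7 ^ 4 * u := h1 ▸ dvd_add (hx.mul_left a) (hy.mul_left b)
    have hv : z ∣ 7 ^ 4 * v := h2 ▸ dvd_add (hx.mul_left c) (hy.mul_left d)
    have hz7 : ¬ z ∣ 7 ^ 4 := by
      intro h
      have p7 : Prime (7 : ℤ) := by
        have := Nat.prime_iff_prime_int.1 (show Nat.Prime 7 by norm_num)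
        exact_mod_cast this
      have h8 := hz.dvd_of_dvd_pow h
      exact h7 ((((hz.associated_of_dvd p7 h8).symm).dvd).trans hx)
    exact hz.not_unit (hco.isUnit_of_dvd' ((hz.dvd_or_dvd hu).resolve_left hz7)
      ((hz.dvd_or_dvd hv).resolve_left hz7))

theorem aux_rot (u v : ℤ) (hco : IsCoprime u v) :
    IsCoprime (39 * u - 55 * v) (55 * u + 39 * v - 55 * v) ∨
     IsCoprime (-16 * u + 55 * v) (-55 * u - 16 * v + 55 * v) := by
  by_cases h : (7 : ℤ) ∣ 39 * u - 55 * v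
  · right
    refine aux_coprime u v _ _ 39 (-55) 55 (-16) hco ?_ (by ring) (by ring)
    intro h2
    have hu : (7 : ℤ) ∣ u := by omega
    have hv : (7 : ℤ) ∣ v := by omega
    have h3 := hco.isUnit_of_dvd' hu hv
    rw [Int.isUnit_iff] at h3
    omega
  · left
    exact aux_coprime u v _ _ (-16) 55 (-55) 39 hco h (by ring) (by ring)

theorem aux_thue (p : ℕ) (hp : p.Prime) (hbig : 471000 ≤ p) (ρ : ℤ) :
    ∃ u v : ℤ, IsCoprime u v ∧ |u| * 600 ≤ p ∧ |v| * 600 ≤ p ∧ ¬ (p : ℤ) ∣ v ∧ (p : ℤ) ∣ u - ρ * v := by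
  have hpp : Prime (p : ℤ) := Nat.prime_iff_prime_int.1 hp
  set n := Nat.sqrt p with hn
  have n1 : n * n ≤ p := Nat.sqrt_le p
  have n2 : p < (n + 1) * (n + 1) := Nat.lt_succ_sqrt p
  have n3 : 600 ≤ n := Nat.le_sqrt.2 (by omega)
  obtain ⟨j, k, k0, k1, hjk⟩ := Real.exists_int_int_abs_mul_sub_le ((ρ : ℝ) / p) (n := n) (by omega)
  have hp0 : (0 : ℝ) < p := by exact_mod_cast hp.pos
  have hu : |k * ρ - j * p| ≤ (n : ℤ) := by
    have h1 : |(k : ℝ) * ρ - j * p| < n + 1 := by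
      have : (k : ℝ) * ρ - j * p = (k * (ρ / p) - j) * p := by field_simp
      rw [this, abs_mul, abs_of_pos hp0]
      calc _ ≤ 1 / ((n : ℝ) + 1) * p := by gcongr
        _ < n + 1 := by
          rw [one_div_mul_eq_div, div_lt_iff₀ (by positivity)]
          exact_mod_cast n2
    have h2 : |k * ρ - j * p| < (n : ℤ) + 1 := by exact_mod_cast h1
    omega
  set U := k * ρ - j * p with hU
  obtain ⟨g, u, v, g0, hco, hu', hv'⟩ : ∃ g u v : ℤ, 0 < g ∧ IsCoprime u v ∧ U = u * g ∧ k = v * g := by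
    have hg : 0 < Int.gcd U k := Int.gcd_pos_of_ne_zero_right _ k0.ne'
    obtain ⟨u, v, h1, h2, h3⟩ := Int.exists_gcd_one hg
    exact ⟨Int.gcd U k, u, v, by exact_mod_cast hg, Int.isCoprime_iff_gcd_eq_one.2 h1, h2, h3⟩
  have hpk : ¬ (p : ℤ) ∣ k := by
    intro h
    have := Int.le_of_dvd k0 h
    have : (p : ℤ) ≤ n := by omega
    norm_cast at this
    nlinarith
  have hnp : (n : ℤ) * 600 ≤ p := by
    have : n * 600 ≤ p := by nlinarith
    exact_mod_cast this
  refine ⟨u, v, hco, ?_, ?_, ?_, ?_⟩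
  · rw [hu', abs_mul, abs_of_pos g0] at hu
    have := abs_nonneg u
    nlinarith
  · have : |k| ≤ n := by rwa [abs_of_pos k0]
    rw [hv', abs_mul, abs_of_pos g0] at this
    have := abs_nonneg v
    nlinarith
  · intro h
    exact hpk (hv' ▸ Dvd.dvd.mul_right h g)
  · have h1 : (p : ℤ) ∣ g * (u - ρ * v) := by
      refine ⟨-j, ?_⟩
      have : u * g = v * g * ρ - j * p := by rw [← hu', ← hv']
      linear_combination this
    rcases hpp.dvd_or_dvd h1 with h | h
    · exact absurd (hv' ▸ Dvd.dvd.mul_left h v) hpk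
    · exact h

/-- The direction for `r = 1`. -/
theorem aux_dir1 (p : ℕ) (hp : p.Prime) (hbig : 471000 ≤ p) :
    ∃ u v w : ℤ, IsCoprime u v ∧ 10 ≤ u ∧ u * 500 ≤ p ∧ |v| * 500 ≤ p ∧ ¬ (p : ℤ) ∣ w ∧
      ¬ (p : ℤ) ∣ u - v ∧ (p : ℤ) ∣ w ^ 2 + 3 * (u ^ 2 - u * v + v ^ 2) := by
  have hpp : Prime (p : ℤ) := Nat.prime_iff_prime_int.1 hp
  -- reduce to max ≥ 10
  suffices H : ∃ u v w : ℤ, IsCoprime u v ∧ (10 ≤ |u| ∨ 10 ≤ |v|) ∧ |u| * 500 ≤ p ∧ |v| * 500 ≤ p ∧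
      ¬ (p : ℤ) ∣ w ∧ (p : ℤ) ∣ w ^ 2 + 3 * (u ^ 2 - u * v + v ^ 2) by
    have H2 : ∃ u v w : ℤ, IsCoprime u v ∧ 10 ≤ |u| ∧ |u| * 500 ≤ p ∧ |v| * 500 ≤ p ∧
      ¬ (p : ℤ) ∣ w ∧ (p : ℤ) ∣ w ^ 2 + 3 * (u ^ 2 - u * v + v ^ 2) := by
      obtain ⟨u, v, w, h1, h2, h3, h4, h5, h6⟩ := H
      rcases h2 with h2 | h2
      · exact ⟨u, v, w, h1, h2, h3, h4, h5, h6⟩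
      · refine ⟨v, u, w, h1.symm, h2, h4, h3, h5, ?_⟩
        convert h6 using 1; ring
    have H3 : ∃ u v w : ℤ, IsCoprime u v ∧ 10 ≤ u ∧ u * 500 ≤ p ∧ |v| * 500 ≤ p ∧
      ¬ (p : ℤ) ∣ w ∧ (p : ℤ) ∣ w ^ 2 + 3 * (u ^ 2 - u * v + v ^ 2) := by
      obtain ⟨u, v, w, h1, h2, h3, h4, h5, h6⟩ := H2
      rcases le_total 0 u with hu | hu
      · rw [abs_of_nonneg hu] at h2 h3
        exact ⟨u, v, w, h1, h2, h3, h4, h5, h6⟩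
      · rw [abs_of_nonpos hu] at h2 h3
        refine ⟨-u, -v, w, h1.neg_neg, h2, h3, by rwa [abs_neg], h5, ?_⟩
        convert h6 using 1; ring
    obtain ⟨u, v, w, h1, h2, h3, h4, h5, h6⟩ := H3
    refine ⟨u, v, w, h1, h2, h3, h4, h5, ?_, h6⟩
    intro h
    have hv := abs_le.1 (show |v| ≤ |v| from le_rfl)
    have : u - v = 0 := by
      apply Int.eq_zero_of_abs_lt_dvd h
      rw [abs_lt]
      constructor <;> omega
    have huv : u = v := by omega
    rw [← huv, isCoprime_self, Int.isUnit_iff] at h1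
    omega
  obtain ⟨ρ, w, hw, -, hρ⟩ := aux_rho p hp (by omega)
  obtain ⟨u, v, hco, hu, hv, hpv, huv⟩ := aux_thue p hp hbig ρ
  have hN : (p : ℤ) ∣ (w * v) ^ 2 + 3 * (u ^ 2 - u * v + v ^ 2) := by
    obtain ⟨a, ha⟩ := hρ
    obtain ⟨b, hb⟩ := huv
    have : u = ρ * v + p * b := by linarith
    refine ⟨a * v ^ 2 + 3 * b * (u + ρ * v - v), ?_⟩
    rw [this]
    linear_combination v ^ 2 * ha
  have hwv : ¬ (p : ℤ) ∣ w * v := by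
    intro h
    rcases hpp.dvd_or_dvd h with h | h
    · exact hw h
    · exact hpv h
  by_cases hlarge : 10 ≤ |u| ∨ 10 ≤ |v|
  · exact ⟨u, v, w * v, hco, hlarge, by have := abs_nonneg u; omega, by have := abs_nonneg v; omega, hwv, hN⟩
  push Not at hlarge
  obtain ⟨hu9, hv9⟩ := hlarge
  rw [abs_lt] at hu9 hv9
  have hw49 : ¬ (p : ℤ) ∣ 49 * (w * v) := by
    intro h
    rcases hpp.dvd_or_dvd h with h | h
    · have := Int.le_of_dvd (by norm_num) h
      omega
    · exact hwv h
  have hNpos : 1 ≤ u ^ 2 - u * v + v ^ 2 := by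
    have hv0 : v ≠ 0 := by rintro rfl; exact hpv (dvd_zero _)
    have : 0 < v ^ 2 := by positivity
    nlinarith [sq_nonneg (2 * u - v)]
  have big : ∀ x y : ℤ, x ^ 2 - x * y + y ^ 2 = 2401 * (u ^ 2 - u * v + v ^ 2) → 10 ≤ |x| ∨ 10 ≤ |y| := by
    intro x y h
    by_contra hh
    push Not at hh
    obtain ⟨h1, h2⟩ := hh
    rw [abs_lt] at h1 h2
    nlinarith [sq_nonneg (x + y)]
  rcases aux_rot u v hco with h | h
  · refine ⟨_, _, 49 * (w * v), h, big _ _ (by ring), ?_, ?_, hw49, ?_⟩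
    · have : |39 * u - 55 * v| ≤ 900 := by rw [abs_le]; omega
      omega
    · have : |55 * u + 39 * v - 55 * v| ≤ 900 := by rw [abs_le]; omega
      omega
    · obtain ⟨c, hc⟩ := hN; exact ⟨2401 * c, by linear_combination 2401 * hc⟩
  · refine ⟨_, _, 49 * (w * v), h, big _ _ (by ring), ?_, ?_, hw49, ?_⟩
    · have : |-16 * u + 55 * v| ≤ 900 := by rw [abs_le]; omega
      omega
    · have : |-55 * u - 16 * v + 55 * v| ≤ 900 := by rw [abs_le]; omega
      omega
    · obtain ⟨c, hc⟩ := hN; exact ⟨2401 * c, by linear_combination 2401 * hc⟩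

/-- The direction for `r ≥ 2`. -/
theorem aux_dir2 (p : ℕ) (hp : p.Prime) (hp5 : 5 ≤ p) :
    ∃ u w : ℤ, 20 ≤ u ∧ u < 20 + p ∧ ¬ (p : ℤ) ∣ w ∧
      ¬ (p : ℤ) ∣ u - 1 ∧ (p : ℤ) ∣ w ^ 2 + 3 * (u ^ 2 - u * 1 + 1 ^ 2) := by
  obtain ⟨ρ, w, hw, h1, hρ⟩ := aux_rho p hp hp5
  have hp0 : (0 : ℤ) < p := by exact_mod_cast hp.pos
  have hd := Int.emod_add_mul_ediv (ρ - 20) p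
  set i := (ρ - 20) / (p : ℤ)
  have hu : 20 + (ρ - 20) % (p : ℤ) = ρ - p * i := by linarith
  refine ⟨20 + (ρ - 20) % p, w, by linarith [Int.emod_nonneg (ρ - 20) hp0.ne'],
    by linarith [Int.emod_lt_of_pos (ρ - 20) hp0], hw, ?_, ?_⟩
  · intro h
    apply h1
    rw [hu] at h
    obtain ⟨a, ha⟩ := h
    exact ⟨a + i, by linarith⟩
  · rw [hu]
    obtain ⟨a, ha⟩ := hρ
    exact ⟨a + 3 * (-2 * ρ * i + p * i ^ 2 + i), by linear_combination ha⟩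

theorem aux_dir (p : ℕ) (hp : p.Prime) (hp5 : 5 ≤ p) (r : ℕ) (hr : 1 ≤ r)
    (hq : 471000 ≤ p ^ r) :
    ∃ u v w : ℤ, IsCoprime u v ∧ 0 < u ∧ u ≤ (p : ℤ) ^ r / 9 ∧
      (p : ℤ) ^ r + |v| * u ≤ u * ((p : ℤ) ^ r / 9 - 1) ∧ ¬ (p : ℤ) ∣ w ∧
      ¬ (p : ℤ) ∣ u - v ∧ (p : ℤ) ∣ w ^ 2 + 3 * (u ^ 2 - u * v + v ^ 2) := by
  have hqz : (471000 : ℤ) ≤ (p : ℤ) ^ r := by exact_mod_cast hq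
  rcases Nat.lt_or_ge r 2 with h | h
  · have : r = 1 := by omega
    subst this
    rw [pow_one] at hq hqz ⊢
    obtain ⟨u, v, w, h1, h2, h3, h4, h5, h6, h7⟩ := aux_dir1 p hp hq
    refine ⟨u, v, w, h1, by omega, by omega, ?_, h5, h6, h7⟩
    have h8 : (p : ℤ) ≤ 10 * ((p : ℤ) / 9 - 1 - |v|) := by omega
    nlinarith
  · obtain ⟨u, w, h2, h3, h5, h6, h7⟩ := aux_dir2 p hp hp5
    have h8 : (p : ℤ) ^ 2 ≤ (p : ℤ) ^ r := pow_le_pow_right₀ (by omega) h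
    have h9 : (p : ℤ) * 100 ≤ (p : ℤ) ^ r := by
      rcases le_total (p : ℤ) 100 with h | h <;> nlinarith
    generalize (p : ℤ) ^ r = q at *
    refine ⟨u, 1, w, isCoprime_one_right, by omega, by omega, ?_, h5, h6, h7⟩
    have h10 : q ≤ 10 * (q / 9 - 1 - 1) := by omega
    rw [abs_one]
    nlinarith

theorem aux_final (n : ℕ) (m δ r p : ℕ) (hp : p.Prime) (hp5 : 5 ≤ p)
    (hδ1 : 1 ≤ δ) (hδ3 : δ ≤ 3) (hr : 1 ≤ r) (hm : m = δ * p ^ r)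
    (hbig : 471000 ≤ p ^ r) (hn : m ^ 2 ≤ 9 * n) :
    ∃ a b : ℕ, 1 ≤ a ∧ a < b ∧ b ≤ n ∧ b ^ 3 + b ≡ a ^ 3 + a [MOD m ^ 2] := by
  have hpp : Prime (p : ℤ) := Nat.prime_iff_prime_int.1 hp
  obtain ⟨u, v, w, h1, h2, h3, h4, h5, h6, h7⟩ := aux_dir p hp hp5 r hr hbig
  obtain ⟨w', hw1, hw2⟩ := aux_hensel p hp hp5 _ w h5 h7 (r - 1)
  rw [Nat.sub_add_cancel hr] at hw2
  have cop : ∀ a : ℤ, ¬ (p : ℤ) ∣ a → IsCoprime a ((p : ℤ) ^ r) := fun a ha =>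
    ((hpp.coprime_iff_not_dvd.2 ha).symm).pow_right
  have hδp : ¬ (p : ℤ) ∣ (δ : ℤ) := by
    intro h
    have := Int.le_of_dvd (by omega) h
    omega
  have h3p : ¬ (p : ℤ) ∣ 3 := by
    intro h
    have := Int.le_of_dvd (by omega) h
    omega
  have hq0 : (0 : ℤ) < (p : ℤ) ^ r := by have := hp.pos; positivity
  obtain ⟨x, y, hx1, hx2, hy1, hy2, hxy, hd⟩ := aux_core ((p : ℤ) ^ r) ((p : ℤ) ^ r / 9) ((δ : ℤ) ^ 2) u v w'
    hq0 h2 h1 h3 h4 hw2 (cop _ hw1) ((cop _ hδp).pow_left) (cop _ h3p)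
    (fun h => h6 ((dvd_pow_self _ (by omega)).trans h))
  have main : ∀ x y : ℤ, 1 ≤ x → x < y → y ≤ (p : ℤ) ^ r * ((p : ℤ) ^ r / 9) →
      ((p : ℤ) ^ r) ^ 2 ∣ ((δ : ℤ) ^ 2) ^ 2 * (x ^ 2 + x * y + y ^ 2) + 1 →
      ∃ a b : ℕ, 1 ≤ a ∧ a < b ∧ b ≤ n ∧ b ^ 3 + b ≡ a ^ 3 + a [MOD m ^ 2] := by
    intro x y hx hxy hy hd
    have hD : (0 : ℤ) < (δ : ℤ) ^ 2 := by positivity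
    lift x to ℕ using by omega
    lift y to ℕ using by omega
    have hmz : (m : ℤ) = δ * (p : ℤ) ^ r := by rw [hm]; push_cast; ring
    refine ⟨δ ^ 2 * x, δ ^ 2 * y, ?_, ?_, ?_, ?_⟩
    · have : 0 < δ ^ 2 * x := Nat.mul_pos (by positivity) (by omega)
      omega
    · exact Nat.mul_lt_mul_of_pos_left (by omega) (by positivity)
    · zify at hn ⊢
      have h9 : 9 * ((p : ℤ) ^ r / 9) ≤ (p : ℤ) ^ r := by omega
      have e1 : 9 * (y : ℤ) ≤ ((p : ℤ) ^ r) ^ 2 := by nlinarith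
      rw [hmz] at hn
      nlinarith
    · apply Nat.ModEq.symm
      rw [Nat.modEq_iff_dvd]
      push_cast
      rw [hmz]
      obtain ⟨c, hc⟩ := hd
      refine ⟨(y - x) * c, ?_⟩
      linear_combination ((δ : ℤ) ^ 2 * (y - x)) * hc
  rcases lt_or_gt_of_ne hxy with h | h
  · exact main x y hx1 h hy2 hd
  · refine main y x hy1 h hx2 ?_
    convert hd using 1; ring

/-- Case (i): `n ≥ 2·10¹²`, `√n < m < 3^k`, and `m = δ·p^r` with `1 ≤ δ ≤ 3`, `p ≥ 5`
prime and `r ≥ 1`.  Then there exist `1 ≤ a < b ≤ n` with `b³ + b ≡ a³ + a (mod m²)`. -/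
theorem collision_case_i (n : ℕ) (hn : 2 * 10 ^ 12 ≤ n) (k : ℕ)
    (hk : IsLeast {j : ℕ | 1 ≤ j ∧ Real.sqrt n ≤ 3 ^ j} k)
    (m δ r p : ℕ) (hp : p.Prime) (hp5 : 5 ≤ p)
    (hδ1 : 1 ≤ δ) (hδ3 : δ ≤ 3) (hr : 1 ≤ r) (hm : m = δ * p ^ r)
    (hm1 : Real.sqrt n < m) (hm2 : m < 3 ^ k) :
    ∃ a b : ℕ, 1 ≤ a ∧ a < b ∧ b ≤ n ∧ b ^ 3 + b ≡ a ^ 3 + a [MOD m ^ 2] := by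
  have hnm : n < m ^ 2 := by
    have := (Real.sqrt_lt' (lt_of_le_of_lt (Real.sqrt_nonneg _) hm1)).1 hm1
    exact_mod_cast this
  have hm3 : 1413000 < m := by
    by_contra h
    push Not at h
    have : m ^ 2 ≤ 1413000 ^ 2 := Nat.pow_le_pow_left h 2
    omega
  have hbig : 471000 ≤ p ^ r := by
    by_contra h
    push Not at h
    rw [hm] at hm3
    nlinarith
  have hmn : m ^ 2 ≤ 9 * n := by
    obtain ⟨⟨hk1, -⟩, hk2⟩ := hk
    obtain ⟨j, rfl⟩ : ∃ j, k = j + 1 := ⟨k - 1, by omega⟩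
    have hj1 : 1 ≤ j := by
      by_contra h
      have : j = 0 := by omega
      subst this
      norm_num at hm2
      omega
    have hj : (3 : ℝ) ^ j < Real.sqrt n := by
      by_contra h
      push Not at h
      have := hk2 (show j ∈ {j : ℕ | 1 ≤ j ∧ Real.sqrt n ≤ 3 ^ j} from ⟨hj1, h⟩)
      omega
    have hj2 : ((3 : ℝ) ^ j) ^ 2 < n := (Real.lt_sqrt (by positivity)).1 hj
    have hj3 : (3 ^ j) ^ 2 < n := by exact_mod_cast hj2
    rw [pow_succ] at hm2
    nlinarith
  exact aux_final n m δ r p hp hp5 hδ1 hδ3 hr hm hbig hmn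
end
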